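/- arXiv:1506.08484 — 2 statements merged into one kernel-verified Lean document; each statement's English description precedes it below -/
import Mathlib

section
/- For each ℓ ∈ {1,2} and k ∈ {1,2}: under the conditioned measure ℙ_ℓ with the conditionally resampled exchangeable pair, E_ℓ[(M − M')^k | M] = L_k(m(σ)) + R_k(m(σ)) + T_{ℓ,k}(m(σ)), where R_k are the error functions from the unconditioned moment computation (satisfying |R_k(m)| ≤ K/N for all m ∈ [0,1]) and T_{ℓ,k} satisfies E_ℓ|T_{ℓ,k}(m(σ))| ≤ K·ℙ_ℓ(σ ∈ S_ℓ'') for a constant K independent of N. -/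
open Real Finset MeasureTheory

noncomputable section

/-- Dimer configurations (matchings of the complete graph on `Fin N`), encoded as
involutions of `Fin N`: fixed points are monomers, 2-cycles are dimers. -/
abbrev Dimer (N : ℕ) := {f : Fin N → Fin N // ∀ i, f (f i) = i}

/-- The set of monomers (dimer-free vertices) of a dimer configuration. -/
def monomers {N : ℕ} (D : Dimer N) : Finset (Fin N) :=
  Finset.univ.filter fun i => D.1 i = i

/-- Monomer density `m(D) = |𝓜(D)|/N`. -/
def mDim {N : ℕ} (D : Dimer N) : ℝ := ((monomers D).card : ℝ) / N

/-- The parameter `b = (log N)/2 + h - J`. -/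
def bIMD (N : ℕ) (J h : ℝ) : ℝ := Real.log N / 2 + h - J

/-- The Gibbs weight `exp(-H(D)) = exp(N (a m(D)^2 + b m(D)))` with `a = J`. -/
def wDim (N : ℕ) (J h : ℝ) (D : Dimer N) : ℝ :=
  Real.exp (N * (J * mDim D ^ 2 + bIMD N J h * mDim D))

/-- The probability of an event `A` under the IMD Gibbs measure. -/
def probDim (N : ℕ) (J h : ℝ) (A : Dimer N → Prop) : ℝ :=
  (∑ D : Dimer N, Set.indicator {D | A D} (wDim N J h) D) / ∑ D : Dimer N, wDim N J h D

/-- The conditional probability `ℙ(A | B)` under the IMD Gibbs measure. -/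
def condProbDim (N : ℕ) (J h : ℝ) (A B : Dimer N → Prop) : ℝ :=
  (∑ D : Dimer N, Set.indicator {D | A D ∧ B D} (wDim N J h) D) /
    ∑ D : Dimer N, Set.indicator {D | B D} (wDim N J h) D

/-- `g(x) = (√(e^{4x} + 4 e^{2x}) - e^{2x})/2`. -/
def gFun (x : ℝ) : ℝ := (Real.sqrt (Real.exp (4*x) + 4 * Real.exp (2*x)) - Real.exp (2*x)) / 2

/-- `τ(x) = (2x-1)J + h`. -/
def tauFun (J h x : ℝ) : ℝ := (2*x - 1) * J + h

/-- `𝑝̃(m) = -J m² - (1 - g(τ(m)) + log(1 - g(τ(m))))/2`. -/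
def ptilde (J h m : ℝ) : ℝ :=
  -J * m^2 - (1 - gFun (tauFun J h m) + Real.log (1 - gFun (tauFun J h m))) / 2

/-- The CDF of a centered Gaussian with variance `v`, evaluated at `z`. -/
def gaussCDF (v : ℝ) (z : ℝ) : ℝ :=
  (ProbabilityTheory.gaussianReal 0 (Real.toNNReal v) (Set.Iic z)).toReal

/-- Spin configurations `Σ = {0,1}^N`. -/
abbrev Config (N : ℕ) := Fin N → Bool

/-- `𝓐(σ) = {i : σ_i = 1}`. -/
def ASet {N : ℕ} (σ : Config N) : Finset (Fin N) := Finset.univ.filter fun i => σ i = true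

/-- `M(σ) = ∑ σ_i`. -/
def Msum {N : ℕ} (σ : Config N) : ℕ := (ASet σ).card

/-- Magnetization `m(σ) = M(σ)/N`. -/
def mConf {N : ℕ} (σ : Config N) : ℝ := (Msum σ : ℝ) / N

/-- `D(σ)`: the number of dimer configurations `D` with `𝓜(D) = 𝓐(σ)`. -/
def Dcount (N : ℕ) (σ : Config N) : ℕ :=
  (Finset.univ.filter fun D : Dimer N => monomers D = ASet σ).card

/-- The weight `D(σ) exp(-H(σ))` of the weighted Curie–Weiss model. -/
def wConf (N : ℕ) (J h : ℝ) (σ : Config N) : ℝ :=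
  (Dcount N σ : ℝ) * Real.exp (N * (J * mConf σ ^ 2 + bIMD N J h * mConf σ))

/-- The probability of an event `A` under the weighted Curie–Weiss Gibbs measure. -/
def probConf (N : ℕ) (J h : ℝ) (A : Config N → Prop) : ℝ :=
  (∑ σ : Config N, Set.indicator {σ | A σ} (wConf N J h) σ) / ∑ σ : Config N, wConf N J h σ

/-- Expectation under the weighted Curie–Weiss Gibbs measure. -/
def EConf (N : ℕ) (J h : ℝ) (f : Config N → ℝ) : ℝ :=
  (∑ σ : Config N, wConf N J h σ * f σ) / ∑ σ : Config N, wConf N J h σ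

/-- `L₁(m) = 2(1-m)(m² - (1-m)e^{2τ(m)})/((1-m) + e^{2τ(m)})`. -/
def Lone (J h m : ℝ) : ℝ :=
  2*(1-m)*(m^2 - (1-m)*Real.exp (2 * tauFun J h m)) / ((1-m) + Real.exp (2 * tauFun J h m))

/-- `L₂(m) = 4(1-m)(m² + (1-m)e^{2τ(m)})/((1-m) + e^{2τ(m)})`. -/
def Ltwo (J h m : ℝ) : ℝ :=
  4*(1-m)*(m^2 + (1-m)*Real.exp (2 * tauFun J h m)) / ((1-m) + Real.exp (2 * tauFun J h m))

/-- The configuration obtained from `σ` by setting the spins at `u, v` to `s, t`. -/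
def upd {N : ℕ} (σ : Config N) (u v : Fin N) (s t : Bool) : Config N :=
  fun i => if i = u then s else if i = v then t else σ i

/-- The edges of the complete graph, enumerated as ordered pairs `u < v`. -/
def cEdges (N : ℕ) : Finset (Fin N × Fin N) := Finset.univ.filter fun p => p.1 < p.2

/-- The probability of resampling the pair of spins at `(u,v)` to `(s,t)`:
the conditional distribution of `(σ_u, σ_v)` given `(σ_i)_{i ≠ u,v}`. -/
def qCond (N : ℕ) (J h : ℝ) (σ : Config N) (u v : Fin N) (s t : Bool) : ℝ :=
  wConf N J h (upd σ u v s t) / ∑ st : Bool × Bool, wConf N J h (upd σ u v st.1 st.2)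

/-- `E[F(σ, σ') | σ]` for the exchangeable pair `(σ, σ')` obtained by resampling the
spins at a uniformly chosen edge. -/
def condE2 (N : ℕ) (J h : ℝ) (F : Config N → Config N → ℝ) (σ : Config N) : ℝ :=
  ((cEdges N).card : ℝ)⁻¹ * ∑ p ∈ cEdges N, ∑ st : Bool × Bool,
    qCond N J h σ p.1 p.2 st.1 st.2 * F σ (upd σ p.1 p.2 st.1 st.2)

/-- The weight of the Gibbs measure conditioned on the event `S`. -/
def wCond (N : ℕ) (J h : ℝ) (S : Config N → Prop) (σ : Config N) : ℝ :=
  Set.indicator {σ | S σ} (wConf N J h) σ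

/-- `ℙ_ℓ(A) = ℙ(A | S)`, probability under the conditioned Gibbs measure. -/
def probL (N : ℕ) (J h : ℝ) (S A : Config N → Prop) : ℝ :=
  (∑ σ : Config N, Set.indicator {σ | A σ} (wCond N J h S) σ) / ∑ σ : Config N, wCond N J h S σ

/-- Expectation under the conditioned Gibbs measure `ℙ(·|S)`. -/
def EL (N : ℕ) (J h : ℝ) (S : Config N → Prop) (f : Config N → ℝ) : ℝ :=
  (∑ σ : Config N, wCond N J h S σ * f σ) / ∑ σ : Config N, wCond N J h S σ

/-- Resampling probability for the conditioned measure `ℙ(·|S)`. -/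
def qCondL (N : ℕ) (J h : ℝ) (S : Config N → Prop) (σ : Config N) (u v : Fin N)
    (s t : Bool) : ℝ :=
  wCond N J h S (upd σ u v s t) / ∑ st : Bool × Bool, wCond N J h S (upd σ u v st.1 st.2)

/-- `E_ℓ[F(σ, σ') | σ]` for the exchangeable pair under the conditioned measure. -/
def condE2L (N : ℕ) (J h : ℝ) (S : Config N → Prop) (F : Config N → Config N → ℝ)
    (σ : Config N) : ℝ :=
  ((cEdges N).card : ℝ)⁻¹ * ∑ p ∈ cEdges N, ∑ st : Bool × Bool,
    qCondL N J h S σ p.1 p.2 st.1 st.2 * F σ (upd σ p.1 p.2 st.1 st.2)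

/-- The maximizer set `O` of `𝑝̃` on `[0,1]`. -/
def maxSet (J h : ℝ) : Set ℝ :=
  {x | x ∈ Set.Icc (0:ℝ) 1 ∧ ∀ y ∈ Set.Icc (0:ℝ) 1, ptilde J h y ≤ ptilde J h x}

end

theorem Msum_eq_sum {N : ℕ} (σ : Config N) : Msum σ = ∑ i, (σ i).toNat := by
  rw [Msum, ASet, Finset.card_filter]
  refine Finset.sum_congr rfl fun i _ => ?_
  cases σ i <;> rfl

theorem Msum_le {N : ℕ} (σ : Config N) : Msum σ ≤ N := by
  simpa [Msum] using Finset.card_le_univ (ASet σ)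

theorem Msum_update {N : ℕ} (σ : Config N) (u : Fin N) (s : Bool) :
    Msum (Function.update σ u s) + (σ u).toNat = Msum σ + s.toNat := by
  rw [Msum_eq_sum, Msum_eq_sum, ← Finset.add_sum_erase _ _ (Finset.mem_univ u),
    ← Finset.add_sum_erase _ (fun i => (σ i).toNat) (Finset.mem_univ u)]
  have : ∑ i ∈ Finset.univ.erase u, (Function.update σ u s i).toNat
      = ∑ i ∈ Finset.univ.erase u, (σ i).toNat :=
    Finset.sum_congr rfl fun i hi => by
      rw [Function.update_of_ne (Finset.ne_of_mem_erase hi)]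
  rw [this, Function.update_self]
  omega

theorem upd_eq_update {N : ℕ} (σ : Config N) (u v : Fin N) (s t : Bool) :
    upd σ u v s t = Function.update (Function.update σ v t) u s := by
  funext i
  simp only [upd, Function.update_apply]

theorem Msum_upd {N : ℕ} (σ : Config N) {u v : Fin N} (huv : u ≠ v) (s t : Bool) :
    Msum (upd σ u v s t) + (σ u).toNat + (σ v).toNat = Msum σ + s.toNat + t.toNat := by
  have h₁ := Msum_update (Function.update σ v t) u s
  have h₂ := Msum_update σ v t
  rw [Function.update_of_ne huv] at h₁
  rw [upd_eq_update]
  omega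

theorem exists_Msum_eq {N M : ℕ} (hM : M ≤ N) : ∃ σ : Config N, Msum σ = M := by
  obtain ⟨A, -, hA⟩ := Finset.exists_subset_card_eq
    (s := (Finset.univ : Finset (Fin N))) (n := M) (by simpa using hM)
  refine ⟨fun i => decide (i ∈ A), ?_⟩
  simp [Msum, ASet, hA]

/-! ### Counting dimer configurations -/

theorem monomers_eq_ASet_iff {N : ℕ} (D : Dimer N) (σ : Config N) :
    monomers D = ASet σ ↔ ∀ i, D.1 i = i ↔ σ i = true := by
  simp [Finset.ext_iff, monomers, ASet]

theorem Dcount_congr_perm {N : ℕ} {σ σ' : Config N} (e : Equiv.Perm (Fin N))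
    (he : ∀ i, σ' (e i) = σ i) : Dcount N σ = Dcount N σ' := by
  have he' : ∀ i, σ (e.symm i) = σ' i := fun i => by rw [← he, e.apply_symm_apply]
  refine Finset.card_nbij'
    (fun D => ⟨fun i => e (D.1 (e.symm i)), fun i => by simp [D.2]⟩)
    (fun D => ⟨fun i => e.symm (D.1 (e i)), fun i => by simp [D.2]⟩) ?_ ?_ ?_ ?_
  · intro D hD
    simp only [Finset.coe_filter, Finset.mem_univ, true_and, Set.mem_ofPred_eq,
      monomers_eq_ASet_iff] at hD ⊢
    intro i
    rw [← he', ← hD, ← Equiv.eq_symm_apply]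
  · intro D hD
    simp only [Finset.coe_filter, Finset.mem_univ, true_and, Set.mem_ofPred_eq,
      monomers_eq_ASet_iff] at hD ⊢
    intro i
    rw [← he, ← hD, Equiv.symm_apply_eq]
  · intro D _
    ext i
    simp
  · intro D _
    ext i
    simp

theorem Dcount_congr {N : ℕ} {σ σ' : Config N} (hM : Msum σ = Msum σ') :
    Dcount N σ = Dcount N σ' := by
  let e := (Finset.equivOfCardEq hM).extendSubtype
  refine Dcount_congr_perm e fun i => ?_
  by_cases hi : i ∈ ASet σ
  · have h := Equiv.extendSubtype_mem (Finset.equivOfCardEq hM) i hi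
    have h₁ : σ i = true := by simpa [ASet] using hi
    have h₂ : σ' (e i) = true := by simpa [e, ASet] using h
    rw [h₁, h₂]
  · have h := Equiv.extendSubtype_not_mem (Finset.equivOfCardEq hM) i hi
    have h₁ : σ i = false := by simpa [ASet] using hi
    have h₂ : σ' (e i) = false := by simpa [e, ASet] using h
    rw [h₁, h₂]

theorem even_of_Dcount_ne_zero {N : ℕ} {σ : Config N} (hσ : Dcount N σ ≠ 0) :
    Even (N - Msum σ) := by
  obtain ⟨D, hD⟩ := Finset.card_ne_zero.mp hσ
  have hD' : monomers D = ASet σ := by simpa using hD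
  have hf : (show Function.End (Fin N) from D.1) ^ 2 ^ 1 = 1 := funext D.2
  have hfix : Fintype.card (Function.fixedPoints D.1) = Msum σ := by
    rw [Msum, ← hD', Fintype.card_subtype]
    rfl
  have h := Equiv.Perm.card_fixedPoints_modEq hf
  rw [hfix, Fintype.card_fin] at h
  have := Msum_le σ
  rw [Nat.even_iff]
  unfold Nat.ModEq at h
  omega

theorem Dimer.injective {N : ℕ} (D : Dimer N) : Function.Injective D.1 :=
  Function.Involutive.injective D.2

/-- Composition of a dimer configuration with a commuting transposition. -/
def Dimer.compSwap {N : ℕ} (D : Dimer N) (u v : Fin N)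
    (hD : ∀ i, D.1 (Equiv.swap u v i) = Equiv.swap u v (D.1 i)) : Dimer N :=
  ⟨fun i => D.1 (Equiv.swap u v i), fun i => by simp [hD, D.2]⟩

theorem Dimer.comm_swap {N : ℕ} (D : Dimer N) {u v : Fin N}
    (hD : D.1 u = v ∨ D.1 u = u ∧ D.1 v = v) (i : Fin N) :
    D.1 (Equiv.swap u v i) = Equiv.swap u v (D.1 i) := by
  have huv : D.1 u = v → D.1 v = u := fun h => by rw [← h, D.2]
  rcases eq_or_ne i u with rfl | hiu
  · rcases hD with h | ⟨h₁, h₂⟩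
    · simp [h, huv h]
    · simp [h₁, h₂]
  rcases eq_or_ne i v with rfl | hiv
  · rcases hD with h | ⟨h₁, h₂⟩
    · simp [h, huv h]
    · simp [h₁, h₂]
  have h₁ : D.1 i ≠ D.1 u := fun h => hiu (D.injective h)
  have h₂ : D.1 i ≠ D.1 v := fun h => hiv (D.injective h)
  rw [Equiv.swap_apply_of_ne_of_ne hiu hiv]
  rcases hD with h | ⟨h₃, h₄⟩
  · rw [Equiv.swap_apply_of_ne_of_ne (huv h ▸ h₂) (h ▸ h₁)]
  · rw [h₃] at h₁
    rw [h₄] at h₂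
    rw [Equiv.swap_apply_of_ne_of_ne h₁ h₂]

/-- Removing the dimer `uv` is a bijection onto configurations with monomers at `u` and `v`. -/
theorem card_dimers_through {N : ℕ} {σ : Config N} {u v : Fin N} (huv : u ≠ v)
    (hu : σ u = false) (hv : σ v = false) :
    (Finset.univ.filter fun D : Dimer N => monomers D = ASet σ ∧ D.1 u = v).card
      = Dcount N (upd σ u v true true) := by
  have hmem : ∀ D : Dimer N, monomers D = ASet (upd σ u v true true) →
      D.1 u = u ∧ D.1 v = v := fun D hD => by
    rw [monomers_eq_ASet_iff] at hD
    exact ⟨(hD u).mpr (by simp [upd]), (hD v).mpr (by simp [upd])⟩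
  refine Finset.card_bij'
    (fun D hD => D.compSwap u v (D.comm_swap (Or.inl (Finset.mem_filter.mp hD).2.2)))
    (fun D hD => D.compSwap u v (D.comm_swap (Or.inr (hmem D (Finset.mem_filter.mp hD).2))))
    ?_ ?_ ?_ ?_
  · intro D hD
    simp only [Finset.mem_filter, Finset.mem_univ, true_and, monomers_eq_ASet_iff] at hD ⊢
    obtain ⟨hD, h⟩ := hD
    have h' : D.1 v = u := by rw [← h, D.2]
    intro i
    rcases eq_or_ne i u with rfl | hiu
    · simp [Dimer.compSwap, upd, h']
    rcases eq_or_ne i v with rfl | hiv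
    · simp [Dimer.compSwap, upd, h]
    simp [Dimer.compSwap, upd, hiu, hiv, Equiv.swap_apply_of_ne_of_ne hiu hiv, hD]
  · intro D hD
    simp only [Finset.mem_filter, Finset.mem_univ, true_and] at hD ⊢
    obtain ⟨h₁, h₂⟩ := hmem D hD
    rw [monomers_eq_ASet_iff] at hD ⊢
    refine ⟨fun i => ?_, by simp [Dimer.compSwap, h₂]⟩
    rcases eq_or_ne i u with rfl | hiu
    · simp [Dimer.compSwap, h₂, hu, huv.symm]
    rcases eq_or_ne i v with rfl | hiv
    · simp [Dimer.compSwap, h₁, hv, huv]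
    simp [Dimer.compSwap, hiu, hiv, Equiv.swap_apply_of_ne_of_ne hiu hiv, hD, upd]
  · intro D _
    ext i
    simp [Dimer.compSwap]
  · intro D _
    ext i
    simp [Dimer.compSwap]

theorem Dcount_step {N : ℕ} {σ σ' : Config N} (hM : Msum σ' = Msum σ + 2) :
    Dcount N σ = (N - Msum σ - 1) * Dcount N σ' := by
  have hle := Msum_le σ'
  obtain ⟨u, hu⟩ : ∃ u, σ u = false := by
    by_contra! hall
    have : Msum σ = N := by
      have : ASet σ = Finset.univ := by
        ext i
        simpa [ASet] using hall i
      simp [Msum, this]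
    omega
  have hmaps : Set.MapsTo (fun D : Dimer N => D.1 u)
      (Finset.univ.filter fun D : Dimer N => monomers D = ASet σ : Finset (Dimer N))
      ((ASet σ)ᶜ.erase u : Finset (Fin N)) := by
    intro D hD
    simp only [Finset.coe_filter, Finset.mem_univ, true_and, Set.mem_ofPred_eq,
      monomers_eq_ASet_iff] at hD
    have h₁ : D.1 u ≠ u := fun h => by simp [(hD u).mp h] at hu
    have h₂ : σ (D.1 u) ≠ true := fun h => by
      have := (hD _).mpr h
      rw [D.2] at this
      exact h₁ this.symm
    simpa [ASet, h₁] using h₂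
  rw [Dcount, Finset.card_eq_sum_card_fiberwise hmaps, Finset.sum_congr rfl
    (g := fun _ => Dcount N σ')]
  · rw [Finset.sum_const, smul_eq_mul, Finset.card_erase_of_mem (by simp [ASet, hu]),
      Finset.card_compl, Fintype.card_fin, Msum]
  · intro v hv
    have hvu : v ≠ u := Finset.ne_of_mem_erase hv
    have hv' : σ v = false := by simpa [ASet] using Finset.mem_of_mem_erase hv
    rw [Finset.filter_filter, card_dimers_through hvu.symm hu hv']
    refine Dcount_congr ?_
    have := Msum_upd σ hvu.symm true true
    simp only [hu, hv', Bool.toNat_false, Bool.toNat_true] at this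
    omega

/-! ### Weights -/

theorem wConf_congr {N : ℕ} (J h : ℝ) {σ σ' : Config N} (hM : Msum σ = Msum σ') :
    wConf N J h σ = wConf N J h σ' := by
  simp only [wConf, mConf, Dcount_congr hM, hM]

theorem wConf_nonneg {N : ℕ} (J h : ℝ) (σ : Config N) : 0 ≤ wConf N J h σ := by
  unfold wConf
  positivity

theorem even_of_wConf_ne_zero {N : ℕ} {J h : ℝ} {σ : Config N} (hσ : wConf N J h σ ≠ 0) :
    Even (N - Msum σ) :=
  even_of_Dcount_ne_zero fun h0 => hσ (by simp [wConf, h0])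

theorem wConf_step {N : ℕ} (J h : ℝ) {σ σ' : Config N} (hM : Msum σ' = Msum σ + 2) :
    wConf N J h σ' * (N - Msum σ - 1)
      = wConf N J h σ * (N * Real.exp (2 * tauFun J h (mConf σ) + 4 * J / N)) := by
  have hle := Msum_le σ'
  have hN : (0 : ℝ) < N := by exact_mod_cast (by omega : 0 < N)
  have hcast : ((N - Msum σ - 1 : ℕ) : ℝ) = N - Msum σ - 1 := by
    rw [Nat.cast_sub (by omega), Nat.cast_sub (by omega), Nat.cast_one]
  have hexp : Real.exp (N * (J * mConf σ' ^ 2 + bIMD N J h * mConf σ'))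
      = Real.exp (N * (J * mConf σ ^ 2 + bIMD N J h * mConf σ))
        * (N * Real.exp (2 * tauFun J h (mConf σ) + 4 * J / N)) := by
    nth_rewrite 3 [← Real.exp_log hN]
    rw [← Real.exp_add, ← Real.exp_add]
    congr 1
    simp only [mConf, hM, bIMD, tauFun]
    push_cast
    field_simp
    ring
  rw [wConf, wConf, Dcount_step hM, Nat.cast_mul, hcast, hexp]
  ring

/-! ### Resampling with respect to a general weight -/

/-- `E[F(σ, σ') | σ]` when the spins at a uniform edge are resampled from the weight `W`. -/
noncomputable def resampleMean {N : ℕ} (W : Config N → ℝ) (F : Config N → Config N → ℝ) (σ : Config N) : ℝ :=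
  ((cEdges N).card : ℝ)⁻¹ * ∑ p ∈ cEdges N, ∑ st : Bool × Bool,
    W (upd σ p.1 p.2 st.1 st.2) / (∑ st : Bool × Bool, W (upd σ p.1 p.2 st.1 st.2))
      * F σ (upd σ p.1 p.2 st.1 st.2)

theorem condE2_eq_resampleMean (N : ℕ) (J h : ℝ) (F : Config N → Config N → ℝ) (σ : Config N) :
    condE2 N J h F σ = resampleMean (wConf N J h) F σ := rfl

theorem condE2L_eq_resampleMean (N : ℕ) (J h : ℝ) (S : Config N → Prop)
    (F : Config N → Config N → ℝ) (σ : Config N) :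
    condE2L N J h S F σ = resampleMean (wCond N J h S) F σ := rfl

theorem ne_of_mem_cEdges {N : ℕ} {p : Fin N × Fin N} (hp : p ∈ cEdges N) : p.1 ≠ p.2 :=
  (Finset.mem_filter.mp hp).2.ne

theorem resampleMean_congr {N : ℕ} {W W' : Config N → ℝ} (F : Config N → Config N → ℝ)
    {σ : Config N}
    (hW : ∀ u v : Fin N, u ≠ v → ∀ s t, W (upd σ u v s t) = W' (upd σ u v s t)) :
    resampleMean W F σ = resampleMean W' F σ := by
  unfold resampleMean
  congr 1
  refine Finset.sum_congr rfl fun p hp => ?_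
  simp only [hW _ _ (ne_of_mem_cEdges hp)]

theorem abs_resampleMean_le {N : ℕ} {W : Config N → ℝ} (hW : ∀ σ, 0 ≤ W σ)
    {F : Config N → Config N → ℝ} {σ : Config N} {C : ℝ} (hC : 0 ≤ C)
    (hF : ∀ u v : Fin N, u ≠ v → ∀ s t, |F σ (upd σ u v s t)| ≤ C) :
    |resampleMean W F σ| ≤ C := by
  have hpair : ∀ p ∈ cEdges N, |∑ st : Bool × Bool,
      W (upd σ p.1 p.2 st.1 st.2) / (∑ st : Bool × Bool, W (upd σ p.1 p.2 st.1 st.2))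
        * F σ (upd σ p.1 p.2 st.1 st.2)| ≤ C := by
    intro p hp
    refine (Finset.abs_sum_le_sum_abs _ _).trans ?_
    calc _ ≤ ∑ st : Bool × Bool, W (upd σ p.1 p.2 st.1 st.2)
            / (∑ st : Bool × Bool, W (upd σ p.1 p.2 st.1 st.2)) * C := by
          refine Finset.sum_le_sum fun st _ => ?_
          have h0 : 0 ≤ W (upd σ p.1 p.2 st.1 st.2)
              / (∑ st : Bool × Bool, W (upd σ p.1 p.2 st.1 st.2)) :=
            div_nonneg (hW _) (Finset.sum_nonneg fun _ _ => hW _)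
          rw [abs_mul, abs_of_nonneg h0]
          exact mul_le_mul_of_nonneg_left (hF _ _ (ne_of_mem_cEdges hp) _ _) h0
      _ ≤ C := by
          rw [← Finset.sum_mul, ← Finset.sum_div]
          exact mul_le_of_le_one_left hC (div_self_le_one _)
  rw [resampleMean, abs_mul, abs_of_nonneg (by positivity)]
  have hsum := (Finset.abs_sum_le_sum_abs _ _).trans (Finset.sum_le_sum hpair)
  rw [Finset.sum_const, nsmul_eq_mul] at hsum
  refine (mul_le_mul_of_nonneg_left hsum (by positivity)).trans ?_
  rw [← mul_assoc]
  exact mul_le_of_le_one_left hC (inv_mul_le_one)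

theorem sum_cEdges_add_swap {N : ℕ} (f : Fin N → Fin N → ℝ) (hf : ∀ u v, f u v = f v u) :
    2 * ∑ p ∈ cEdges N, f p.1 p.2 + ∑ u, f u u = ∑ u, ∑ v, f u v := by
  have hlt : ∑ p ∈ cEdges N, f p.1 p.2 = ∑ u, ∑ v, if u < v then f u v else 0 := by
    rw [cEdges, Finset.sum_filter, Fintype.sum_prod_type]
  have hgt : ∑ p ∈ cEdges N, f p.1 p.2 = ∑ u, ∑ v, if v < u then f u v else 0 := by
    rw [hlt, Finset.sum_comm]
    simp only [hf]
  have heq : ∑ u, f u u = ∑ u, ∑ v, if u = v then f u v else 0 := by simp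
  rw [two_mul]
  nth_rewrite 1 [hlt]
  rw [hgt, heq, ← Finset.sum_add_distrib, ← Finset.sum_add_distrib]
  refine Finset.sum_congr rfl fun u _ => ?_
  rw [← Finset.sum_add_distrib, ← Finset.sum_add_distrib]
  refine Finset.sum_congr rfl fun v _ => ?_
  rcases lt_trichotomy u v with h | h | h
  · simp [h, h.not_gt, h.ne]
  · simp [h]
  · simp [h, h.not_gt, h.ne']

theorem sum_spin {N : ℕ} (σ : Config N) (f : Bool → ℝ) :
    ∑ u, f (σ u) = Msum σ * f true + (N - Msum σ) * f false := by
  have h : ∀ u, f (σ u) = ((σ u).toNat : ℝ) * (f true - f false) + f false := by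
    intro u
    cases σ u <;> simp
  simp only [h, Finset.sum_add_distrib, ← Finset.sum_mul, ← Nat.cast_sum, ← Msum_eq_sum]
  simp
  ring

theorem sum_cEdges_spin {N : ℕ} (σ : Config N) (f : Bool → Bool → ℝ)
    (hf : f false true = f true false) :
    ∑ p ∈ cEdges N, f (σ p.1) (σ p.2)
      = (Msum σ * (Msum σ - 1) * f true true
        + (N - Msum σ) * (N - Msum σ - 1) * f false false
        + 2 * Msum σ * (N - Msum σ) * f true false) / 2 := by
  have hsymm : ∀ a b, f a b = f b a := by
    intro a b
    cases a <;> cases b <;> simp [hf]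
  have h := sum_cEdges_add_swap (fun u v => f (σ u) (σ v)) fun u v => hsymm _ _
  have h₁ := sum_spin σ (fun a => f a a)
  have h₂ : ∀ u, ∑ v, f (σ u) (σ v) = Msum σ * f (σ u) true + (N - Msum σ) * f (σ u) false :=
    fun u => sum_spin σ (f (σ u))
  have h₃ := sum_spin σ (fun a => Msum σ * f a true + (N - Msum σ) * f a false)
  simp only [h₁, h₂, h₃, hf] at h
  linarith

theorem card_cEdges (N : ℕ) : ((cEdges N).card : ℝ) = N * (N - 1) / 2 := by
  have h := sum_cEdges_add_swap (N := N) (fun _ _ => 1) fun _ _ => rfl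
  simp only [Finset.sum_const, Finset.card_univ, Fintype.card_fin, nsmul_eq_mul, mul_one] at h
  linarith

/-- Conditional `k`-th moment of `M - M'` when two spins with values `a, b` are resampled from the
weight `g ∘ Msum`, starting from total magnetization `M`. -/
noncomputable def pairMoment (g : ℕ → ℝ) (k M : ℕ) (a b : Bool) : ℝ :=
  let c := a.toNat + b.toNat
  (g (M - c) * (c : ℝ) ^ k + 2 * (g (M - c + 1) * ((c : ℝ) - 1) ^ k)
      + g (M - c + 2) * ((c : ℝ) - 2) ^ k)
    / (g (M - c) + 2 * g (M - c + 1) + g (M - c + 2))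

/-- Conditional `k`-th moment of `M - M'` at total magnetization `M`, for the weight
`g ∘ Msum`. -/
noncomputable def momentProfile (N : ℕ) (g : ℕ → ℝ) (k M : ℕ) : ℝ :=
  (M * (M - 1) : ℝ) / (N * (N - 1)) * pairMoment g k M true true
    + ((N - M) * (N - M - 1) : ℝ) / (N * (N - 1)) * pairMoment g k M false false
    + (2 * M * (N - M) : ℝ) / (N * (N - 1)) * pairMoment g k M true false

theorem resampleMean_eq_momentProfile {N : ℕ} {W : Config N → ℝ} {g : ℕ → ℝ}
    (hg : ∀ σ, W σ = g (Msum σ)) (k : ℕ) (σ : Config N) :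
    resampleMean W (fun σ σ' => ((Msum σ : ℝ) - (Msum σ' : ℝ)) ^ k) σ
      = momentProfile N g k (Msum σ) := by
  have hpair : ∀ p ∈ cEdges N, ∑ st : Bool × Bool,
      W (upd σ p.1 p.2 st.1 st.2) / (∑ st : Bool × Bool, W (upd σ p.1 p.2 st.1 st.2))
        * ((Msum σ : ℝ) - (Msum (upd σ p.1 p.2 st.1 st.2) : ℝ)) ^ k
      = pairMoment g k (Msum σ) (σ p.1) (σ p.2) := by
    intro p hp
    have hM : ∀ s t, Msum (upd σ p.1 p.2 s t)
        = Msum σ - ((σ p.1).toNat + (σ p.2).toNat) + (s.toNat + t.toNat) := by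
      intro s t
      have h₁ := Msum_upd σ (ne_of_mem_cEdges hp) s t
      have h₂ := Msum_upd σ (ne_of_mem_cEdges hp) false false
      simp only [Bool.toNat_false] at h₂
      omega
    have hle : (σ p.1).toNat + (σ p.2).toNat ≤ Msum σ := by
      have h₂ := Msum_upd σ (ne_of_mem_cEdges hp) false false
      simp only [Bool.toNat_false] at h₂
      omega
    simp only [hg, hM, pairMoment, Fintype.sum_prod_type, Fintype.sum_bool, Bool.toNat_true,
      Bool.toNat_false]
    push_cast [Nat.cast_sub hle]
    norm_num
    ring_nf
  unfold resampleMean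
  rw [Finset.sum_congr rfl hpair, sum_cEdges_spin σ (pairMoment g k (Msum σ)) (by
    simp [pairMoment]), card_cEdges, momentProfile]
  rw [inv_div]
  ring

/-! ### Asymptotics of the moment profile -/

theorem Lone_eq (J h m : ℝ) (hm : m ≤ 1) :
    Lone J h m = m ^ 2 * (2 ^ 1 * ((1 - m) / ((1 - m) + Real.exp (2 * tauFun J h m))))
      + (1 - m) ^ 2 * ((-2) ^ 1 * (1 - (1 - m) / ((1 - m) + Real.exp (2 * tauFun J h m)))) := by
  have hpos := Real.exp_pos (2 * tauFun J h m)
  have hne : (1 - m) + Real.exp (2 * tauFun J h m) ≠ 0 := by linarith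
  unfold Lone
  field_simp
  ring

theorem Ltwo_eq (J h m : ℝ) (hm : m ≤ 1) :
    Ltwo J h m = m ^ 2 * (2 ^ 2 * ((1 - m) / ((1 - m) + Real.exp (2 * tauFun J h m))))
      + (1 - m) ^ 2 * ((-2) ^ 2 * (1 - (1 - m) / ((1 - m) + Real.exp (2 * tauFun J h m)))) := by
  have hpos := Real.exp_pos (2 * tauFun J h m)
  have hne : (1 - m) + Real.exp (2 * tauFun J h m) ≠ 0 := by linarith
  unfold Ltwo
  field_simp
  ring

theorem abs_falling_div_sub_sq_le {M N : ℕ} (hN : 1 ≤ N) (hM : M ≤ N) :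
    |(M * (M - 1) : ℝ) / (N * (N - 1)) - (M / N : ℝ) ^ 2| ≤ (2 : ℝ) / N := by
  have hMN : (M : ℝ) ≤ N := by exact_mod_cast hM
  have hM0 : (0 : ℝ) ≤ M := M.cast_nonneg
  rcases hN.eq_or_lt with rfl | hN
  · simp only [Nat.cast_one, sub_self, mul_zero, div_zero, zero_sub, div_one, abs_neg] at *
    rw [abs_of_nonneg (by positivity)]
    nlinarith
  · have hN2 : (2 : ℝ) ≤ N := by exact_mod_cast hN
    have hN1 : (0 : ℝ) < N - 1 := by linarith
    have hN0 : (0 : ℝ) < N := by linarith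
    have : (M * (M - 1) : ℝ) / (N * (N - 1)) - (M / N : ℝ) ^ 2
        = -((M * (N - M)) / (N ^ 2 * (N - 1))) := by
      field_simp
      ring
    rw [this, abs_neg, abs_of_nonneg
      (div_nonneg (mul_nonneg hM0 (by linarith)) (by positivity)),
      div_le_div_iff₀ (by positivity) hN0]
    have h₁ : (M * (N - M) : ℝ) ≤ N * N := by nlinarith
    have h₂ : (M * (N - M) * N : ℝ) ≤ N * N * N := mul_le_mul_of_nonneg_right h₁ hN0.le
    nlinarith [mul_nonneg (mul_nonneg hN0.le hN0.le) (by linarith : (0 : ℝ) ≤ N - 2)]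

theorem abs_ratio_sub_ratio_le {x E a b δ ε η : ℝ} (hx₀ : 0 ≤ x) (hx₁ : x ≤ 1) (hE : 0 < E)
    (ha : 0 ≤ a) (hη : 0 < η) (hb : E * η ≤ b) (hax : |a - x| ≤ δ) (hbE : |b - E| ≤ E * ε) :
    |a / (a + b) - x / (x + E)| ≤ (δ + ε) / (E * η) := by
  have hEη : 0 < E * η := by positivity
  have hb₀ : 0 < b := by linarith
  have hid : a / (a + b) - x / (x + E) = ((a - x) * E - x * (b - E)) / ((a + b) * (x + E)) := by
    have : a + b ≠ 0 := by linarith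
    have : x + E ≠ 0 := by linarith
    field_simp
    ring
  have hnum : |(a - x) * E - x * (b - E)| ≤ (δ + ε) * E := by
    refine (abs_sub _ _).trans ?_
    rw [abs_mul, abs_mul, abs_of_pos hE, abs_of_nonneg hx₀]
    have h₁ : |a - x| * E ≤ δ * E := mul_le_mul_of_nonneg_right hax hE.le
    have h₂ : x * |b - E| ≤ E * ε := (mul_le_of_le_one_left (abs_nonneg _) hx₁).trans hbE
    linarith
  have hden : E * η * E ≤ (a + b) * (x + E) :=
    mul_le_mul (by linarith) (by linarith) hE.le (by linarith)
  rw [hid, abs_div, abs_of_pos (by positivity : 0 < (a + b) * (x + E))]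
  calc _ ≤ (δ + ε) * E / (E * η * E) :=
        div_le_div₀ ((abs_nonneg _).trans hnum) hnum (by positivity) hden
    _ = (δ + ε) / (E * η) := by field_simp

/-- A constant controlling the `1/N` corrections to the resampling probabilities. -/
noncomputable def ratioConst (J h : ℝ) : ℝ :=
  (1 + 4 * J * Real.exp (4 * J)) / (Real.exp (2 * h - 2 * J) * Real.exp (-(4 * J)))

theorem ratioConst_nonneg {J : ℝ} (hJ : 0 ≤ J) (h : ℝ) : 0 ≤ ratioConst J h := by
  unfold ratioConst
  positivity

theorem abs_exp_sub_one_le_mul_exp_abs (t : ℝ) : |Real.exp t - 1| ≤ |t| * Real.exp |t| := by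
  rcases le_total 0 t with ht | ht
  · rw [abs_of_nonneg (by linarith [Real.one_le_exp ht]), abs_of_nonneg ht]
    have h₁ := Real.add_one_le_exp (-t)
    have h₂ : Real.exp (-t) * Real.exp t = 1 := by rw [← Real.exp_add]; simp
    nlinarith [Real.exp_pos t]
  · rw [abs_of_nonpos (by linarith [Real.exp_le_one_iff.mpr ht]), abs_of_nonpos ht]
    have h₁ := Real.add_one_le_exp t
    have h₂ : 1 ≤ Real.exp (-t) := Real.one_le_exp (by linarith)
    nlinarith

theorem abs_perturbed_ratio_le {J h m : ℝ} (hJ : 0 ≤ J) (hm : m ∈ Set.Icc (0 : ℝ) 1)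
    {N : ℕ} (hN : 1 ≤ N) {a t : ℝ} (ha : 0 ≤ a) (hax : |a - (1 - m)| ≤ 1 / N)
    (ht : |t| = 4 * J / N) :
    |a / (a + Real.exp (2 * tauFun J h m + t))
        - (1 - m) / ((1 - m) + Real.exp (2 * tauFun J h m))| ≤ ratioConst J h / N := by
  have hN1 : (1 : ℝ) ≤ N := by exact_mod_cast hN
  have ht₁ : |t| ≤ 4 * J := by
    rw [ht]
    exact div_le_self (by positivity) hN1
  set E := Real.exp (2 * tauFun J h m) with hEdef
  have hE : 0 < E := Real.exp_pos _
  have hb : E * Real.exp (-(4 * J)) ≤ Real.exp (2 * tauFun J h m + t) := by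
    rw [hEdef, ← Real.exp_add]
    exact Real.exp_le_exp.mpr (by linarith [neg_le_of_abs_le ht₁])
  have hbE : |Real.exp (2 * tauFun J h m + t) - E| ≤ E * (4 * J / N * Real.exp (4 * J)) := by
    rw [Real.exp_add, ← hEdef, ← mul_sub_one, abs_mul, abs_of_pos hE]
    refine mul_le_mul_of_nonneg_left ?_ hE.le
    refine (abs_exp_sub_one_le_mul_exp_abs t).trans ?_
    rw [← ht]
    exact mul_le_mul_of_nonneg_left (Real.exp_le_exp.mpr ht₁) (abs_nonneg _)
  refine (abs_ratio_sub_ratio_le (by linarith [hm.2]) (by linarith [hm.1]) hE ha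
    (Real.exp_pos _) hb hax hbE).trans ?_
  have hElow : Real.exp (2 * h - 2 * J) ≤ E := by
    refine Real.exp_le_exp.mpr ?_
    unfold tauFun
    nlinarith [mul_nonneg hm.1 hJ]
  have hnum : (0 : ℝ) ≤ 1 / N + 4 * J / N * Real.exp (4 * J) := by positivity
  calc _ ≤ (1 / N + 4 * J / N * Real.exp (4 * J))
          / (Real.exp (2 * h - 2 * J) * Real.exp (-(4 * J))) := by gcongr
    _ = ratioConst J h / N := by
        unfold ratioConst
        field_simp

theorem abs_mul_sub_mul_le {c c₀ P P₀ ε δ B : ℝ} (hc₀ : 0 ≤ c) (hc₁ : c ≤ 1)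
    (hc : |c - c₀| ≤ ε) (hP₀ : |P₀| ≤ B) (hδ : 0 ≤ δ) (hP : c ≠ 0 → |P - P₀| ≤ δ) :
    |c * P - c₀ * P₀| ≤ ε * B + δ := by
  have h₁ : |(c - c₀) * P₀| ≤ ε * B := by
    rw [abs_mul]
    exact mul_le_mul hc hP₀ (abs_nonneg _) ((abs_nonneg _).trans hc)
  have h₂ : |c * (P - P₀)| ≤ δ := by
    rcases eq_or_ne c 0 with rfl | hne
    · simpa using hδ
    · rw [abs_mul, abs_of_nonneg hc₀]
      exact (mul_le_of_le_one_left (abs_nonneg _) hc₁).trans (hP hne)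
  calc _ = |(c - c₀) * P₀ + c * (P - P₀)| := by ring_nf
    _ ≤ _ := (abs_add_le _ _).trans (add_le_add h₁ h₂)

theorem falling_div_mem_Icc {M N : ℕ} (hM : M ≤ N) :
    (M * (M - 1) : ℝ) / (N * (N - 1)) ∈ Set.Icc (0 : ℝ) 1 := by
  have hfall : ∀ n : ℕ, (0 : ℝ) ≤ n * (n - 1) := fun n => by
    rcases n.eq_zero_or_pos with rfl | hn
    · simp
    · have : (1 : ℝ) ≤ n := by exact_mod_cast hn
      exact mul_nonneg (by linarith) (by linarith)
  refine ⟨div_nonneg (hfall M) (hfall N), div_le_one_of_le₀ ?_ (hfall N)⟩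
  rcases hM.eq_or_lt with rfl | hlt
  · rfl
  · have h₁ : (M : ℝ) + 1 ≤ N := by exact_mod_cast hlt
    have h₂ : (0 : ℝ) ≤ M := M.cast_nonneg
    nlinarith

theorem ratio_eq_of_balance {w w' a b : ℝ} (hw : w ≠ 0) (ha : 0 ≤ a) (hb : 0 < b)
    (hbal : w * a = w' * b) : w' / (w' + w) = a / (a + b) := by
  have hw' : w' = w * a / b := by rw [hbal]; field_simp
  have hab : a + b ≠ 0 := by linarith
  have : w * a + w * b ≠ 0 := by
    rw [← mul_add]
    exact mul_ne_zero hw hab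
  rw [hw']
  field_simp

section Profile

variable {N : ℕ} {J h : ℝ} {g : ℕ → ℝ}

theorem profile_step (hg : ∀ σ : Config N, wConf N J h σ = g (Msum σ)) {M : ℕ}
    (hM : M + 2 ≤ N) :
    g (M + 2) * (N - M - 1)
      = g M * (N * Real.exp (2 * tauFun J h (M / N) + 4 * J / N)) := by
  obtain ⟨σ, hσ⟩ := exists_Msum_eq (show M ≤ N by omega)
  obtain ⟨σ', hσ'⟩ := exists_Msum_eq hM
  have hstep := wConf_step J h (σ := σ) (σ' := σ') (by omega)
  rwa [hg, hg, mConf, hσ, hσ'] at hstep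

theorem profile_even (hg : ∀ σ : Config N, wConf N J h σ = g (Msum σ)) {M : ℕ}
    (hM : M ≤ N) (hgM : g M ≠ 0) : Even (N - M) := by
  obtain ⟨σ, hσ⟩ := exists_Msum_eq hM
  rw [← hσ] at hgM ⊢
  exact even_of_wConf_ne_zero (by rwa [hg])

theorem profile_succ_eq_zero (hg : ∀ σ : Config N, wConf N J h σ = g (Msum σ)) {M : ℕ}
    (hM : M + 1 ≤ N) (hgM : g M ≠ 0) : g (M + 1) = 0 := by
  by_contra hne
  have h₁ := profile_even hg (show M ≤ N by omega) hgM
  have h₂ := profile_even hg hM hne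
  rw [Nat.even_iff] at h₁ h₂
  omega

theorem profile_pred_eq_zero (hg : ∀ σ : Config N, wConf N J h σ = g (Msum σ)) {M : ℕ}
    (hM : M + 1 ≤ N) (hgM : g (M + 1) ≠ 0) : g M = 0 := by
  by_contra hne
  exact hgM (profile_succ_eq_zero hg hM hne)

theorem abs_pairMoment_true_true_sub_le (hJ : 0 ≤ J)
    (hg : ∀ σ : Config N, wConf N J h σ = g (Msum σ)) {k M : ℕ} (hk : k ≠ 0)
    (hM : M + 2 ≤ N) (hgM : g (M + 2) ≠ 0) {m : ℝ} (hm : m = ((M + 2 : ℕ) : ℝ) / N) :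
    |pairMoment g k (M + 2) true true
      - 2 ^ k * ((1 - m) / ((1 - m) + Real.exp (2 * tauFun J h m)))|
        ≤ 2 ^ k * (ratioConst J h / N) := by
  have hN : (0 : ℝ) < N := by exact_mod_cast (by omega : 0 < N)
  have hMN : (M : ℝ) + 2 ≤ N := by exact_mod_cast hM
  have hmI : m ∈ Set.Icc (0 : ℝ) 1 := by
    rw [hm]
    exact ⟨by positivity, div_le_one_of_le₀ (by exact_mod_cast hM) hN.le⟩
  have hbal : g (M + 2) * (1 - m + 1 / N)
      = g M * Real.exp (2 * tauFun J h m + -(4 * J / N)) := by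
    have hstep := profile_step hg hM
    have hexp : 2 * tauFun J h (M / N) + 4 * J / N = 2 * tauFun J h m + -(4 * J / N) := by
      rw [hm]
      unfold tauFun
      push_cast
      field_simp
      ring
    rw [hexp] at hstep
    have : g (M + 2) * (1 - m + 1 / N) = g (M + 2) * (N - M - 1) / N := by
      rw [hm]
      push_cast
      field_simp
      ring
    rw [this, hstep]
    field_simp
  have ha : 0 ≤ 1 - m + 1 / N := by
    have := hmI.2
    have : (0 : ℝ) < 1 / N := by positivity
    linarith
  have hval : pairMoment g k (M + 2) true true
      = 2 ^ k * ((1 - m + 1 / N)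
        / (1 - m + 1 / N + Real.exp (2 * tauFun J h m + -(4 * J / N)))) := by
    rw [← ratio_eq_of_balance hgM ha (Real.exp_pos _) hbal]
    have h₁ : g (M + 1) = 0 := profile_pred_eq_zero hg hM hgM
    simp [pairMoment, h₁, hk]
    ring
  rw [hval, ← mul_sub, abs_mul, abs_of_pos (by positivity)]
  refine mul_le_mul_of_nonneg_left ?_ (by positivity)
  refine abs_perturbed_ratio_le hJ hmI (by omega) ha ?_ ?_
  · rw [add_sub_cancel_left, abs_of_pos (by positivity)]
  · rw [abs_neg, abs_of_nonneg (by positivity)]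

theorem abs_pairMoment_false_false_sub_le (hJ : 0 ≤ J)
    (hg : ∀ σ : Config N, wConf N J h σ = g (Msum σ)) {k M : ℕ} (hk : k ≠ 0)
    (hM : M + 2 ≤ N) (hgM : g M ≠ 0) {m : ℝ} (hm : m = (M : ℝ) / N) :
    |pairMoment g k M false false
      - (-2) ^ k * (1 - (1 - m) / ((1 - m) + Real.exp (2 * tauFun J h m)))|
        ≤ 2 ^ k * (ratioConst J h / N) := by
  have hN : (0 : ℝ) < N := by exact_mod_cast (by omega : 0 < N)
  have hMN : (M : ℝ) + 2 ≤ N := by exact_mod_cast hM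
  have hmI : m ∈ Set.Icc (0 : ℝ) 1 := by
    rw [hm]
    exact ⟨by positivity, div_le_one_of_le₀ (by linarith) hN.le⟩
  have ha : 0 < 1 - m - 1 / N := by
    have : 1 - m - 1 / N = (N - M - 1) / N := by
      rw [hm]
      field_simp
    rw [this]
    exact div_pos (by linarith) hN
  have hb := Real.exp_pos (2 * tauFun J h m + 4 * J / N)
  have hbal : g M * Real.exp (2 * tauFun J h m + 4 * J / N) = g (M + 2) * (1 - m - 1 / N) := by
    have hstep := profile_step hg hM
    rw [← hm] at hstep
    have : g (M + 2) * (1 - m - 1 / N) = g (M + 2) * (N - M - 1) / N := by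
      rw [hm]
      field_simp
    rw [this, hstep]
    field_simp
  have hval : pairMoment g k M false false
      = (-2) ^ k * (1 - (1 - m - 1 / N)
        / (1 - m - 1 / N + Real.exp (2 * tauFun J h m + 4 * J / N))) := by
    have hcompl : 1 - (1 - m - 1 / N)
        / (1 - m - 1 / N + Real.exp (2 * tauFun J h m + 4 * J / N))
        = g (M + 2) / (g (M + 2) + g M) := by
      rw [ratio_eq_of_balance hgM hb.le ha hbal, one_sub_div (by positivity)]
      ring
    rw [hcompl]
    have h₁ : g (M + 1) = 0 := profile_succ_eq_zero hg (by omega) hgM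
    simp [pairMoment, h₁, hk]
    ring
  rw [hval, ← mul_sub, abs_mul, abs_pow, abs_neg, abs_two, sub_sub_sub_cancel_left, abs_sub_comm]
  refine mul_le_mul_of_nonneg_left ?_ (by positivity)
  refine abs_perturbed_ratio_le hJ hmI (by omega) ha.le ?_ ?_
  · rw [sub_sub_cancel_left, abs_neg, abs_of_pos (by positivity)]
  · rw [abs_of_nonneg (by positivity)]

theorem pairMoment_true_false_eq_zero (hg : ∀ σ : Config N, wConf N J h σ = g (Msum σ))
    {k M : ℕ} (hk : k ≠ 0) (hM : M + 2 ≤ N) (hgM : g (M + 1) ≠ 0) :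
    pairMoment g k (M + 1) true false = 0 := by
  have h₁ : g M = 0 := profile_pred_eq_zero hg (by omega) hgM
  have h₂ : g (M + 2) = 0 := profile_succ_eq_zero hg hM hgM
  simp [pairMoment, h₁, h₂, hk]

theorem abs_momentProfile_sub_le (hJ : 0 ≤ J) (hN : 1 ≤ N)
    (hg : ∀ σ : Config N, wConf N J h σ = g (Msum σ)) {k M : ℕ} (hk : k ≠ 0)
    (hM : M ≤ N) (hgM : g M ≠ 0) {m : ℝ} (hm : m = (M : ℝ) / N) :
    |momentProfile N g k M
      - (m ^ 2 * (2 ^ k * ((1 - m) / ((1 - m) + Real.exp (2 * tauFun J h m))))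
        + (1 - m) ^ 2 * ((-2) ^ k * (1 - (1 - m) / ((1 - m) + Real.exp (2 * tauFun J h m)))))|
      ≤ 2 ^ k * (4 + 2 * ratioConst J h) / N := by
  have hN0 : (0 : ℝ) < N := by exact_mod_cast hN
  have hMN : (M : ℝ) ≤ N := by exact_mod_cast hM
  have hm1 : 0 ≤ 1 - m := by
    rw [hm, sub_nonneg]
    exact div_le_one_of_le₀ hMN hN0.le
  have hE := Real.exp_pos (2 * tauFun J h m)
  set r := (1 - m) / ((1 - m) + Real.exp (2 * tauFun J h m)) with hr
  have hr₀ : 0 ≤ r := by positivity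
  have hr₁ : r ≤ 1 := div_le_one_of_le₀ (by linarith) (by positivity)
  have hδ : 0 ≤ 2 ^ k * (ratioConst J h / N) := by
    have := ratioConst_nonneg hJ h
    positivity
  have hmixed : (2 * M * (N - M) : ℝ) / (N * (N - 1)) * pairMoment g k M true false = 0 := by
    rcases hM.eq_or_lt with rfl | hlt
    · simp
    · rcases M with _ | M
      · simp
      · rw [pairMoment_true_false_eq_zero hg hk hlt hgM, mul_zero]
  have hdown := abs_mul_sub_mul_le (P := pairMoment g k M true true) (P₀ := 2 ^ k * r)
    (B := 2 ^ k) (falling_div_mem_Icc hM).1 (falling_div_mem_Icc hM).2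
    (abs_falling_div_sub_sq_le hN hM)
    (by
      rw [abs_of_nonneg (by positivity)]
      exact mul_le_of_le_one_right (by positivity) hr₁)
    hδ (by
      intro hne
      match M with
      | 0 => simp at hne
      | 1 => simp at hne
      | M + 2 => exact abs_pairMoment_true_true_sub_le hJ hg hk hM hgM hm)
  have hup := abs_mul_sub_mul_le (P := pairMoment g k M false false)
    (P₀ := (-2) ^ k * (1 - r)) (B := 2 ^ k) (falling_div_mem_Icc (Nat.sub_le N M)).1
    (falling_div_mem_Icc (Nat.sub_le N M)).2
    (abs_falling_div_sub_sq_le hN (Nat.sub_le N M))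
    (by
      rw [abs_mul, abs_pow, abs_neg, abs_two, abs_of_nonneg (by linarith : 0 ≤ 1 - r)]
      exact mul_le_of_le_one_right (by positivity) (by linarith))
    hδ (by
      intro hne
      refine abs_pairMoment_false_false_sub_le hJ hg hk ?_ hgM hm
      by_contra hlt
      obtain hd | hd : N - M = 0 ∨ N - M = 1 := by omega
      · simp [hd] at hne
      · simp [hd] at hne)
  have hx : ((N - M : ℕ) : ℝ) / N = 1 - m := by
    rw [Nat.cast_sub hM, hm]
    field_simp
  rw [← hm] at hdown
  rw [hx, Nat.cast_sub hM] at hup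
  rw [momentProfile, hmixed, add_zero]
  rw [add_sub_add_comm]
  refine (abs_add_le _ _).trans ((add_le_add hdown hup).trans_eq ?_)
  ring

end Profile

theorem exists_profile {N : ℕ} {W : Config N → ℝ}
    (hW : ∀ σ σ', Msum σ = Msum σ' → W σ = W σ') : ∃ g : ℕ → ℝ, ∀ σ, W σ = g (Msum σ) := by
  obtain ⟨g, hg⟩ := (Function.factorsThrough_iff (f := Msum) W).mp fun {σ σ'} h => hW σ σ' h
  exact ⟨g, fun σ => congrFun hg σ⟩

theorem mConf_mul {N : ℕ} (hN : 1 ≤ N) (σ : Config N) : mConf σ * N = Msum σ := by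
  have : (N : ℝ) ≠ 0 := by exact_mod_cast (by omega : N ≠ 0)
  rw [mConf, div_mul_cancel₀ _ this]

theorem floor_mConf_mul {N : ℕ} (hN : 1 ≤ N) (σ : Config N) : ⌊mConf σ * N⌋₊ = Msum σ := by
  rw [mConf_mul hN, Nat.floor_natCast]

theorem abs_Msum_upd_sub_le {N : ℕ} (σ : Config N) {u v : Fin N} (huv : u ≠ v) (s t : Bool) :
    |(Msum σ : ℝ) - Msum (upd σ u v s t)| ≤ 2 := by
  have h := Msum_upd σ huv s t
  have h₁ := (σ u).toNat_le
  have h₂ := (σ v).toNat_le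
  have h₃ := s.toNat_le
  have h₄ := t.toNat_le
  rw [abs_le]
  constructor
  · have : Msum (upd σ u v s t) ≤ Msum σ + 2 := by omega
    have : (Msum (upd σ u v s t) : ℝ) ≤ Msum σ + 2 := by exact_mod_cast this
    linarith
  · have : Msum σ ≤ Msum (upd σ u v s t) + 2 := by omega
    have : (Msum σ : ℝ) ≤ Msum (upd σ u v s t) + 2 := by exact_mod_cast this
    linarith

theorem abs_resampleMean_moment_le {N : ℕ} {W : Config N → ℝ} (hW : ∀ σ, 0 ≤ W σ) {k : ℕ}
    (hk : k ≤ 2) (σ : Config N) :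
    |resampleMean W (fun σ σ' => ((Msum σ : ℝ) - (Msum σ' : ℝ)) ^ k) σ| ≤ 4 := by
  refine abs_resampleMean_le hW (by norm_num) fun u v huv s t => ?_
  rw [abs_pow]
  calc _ ≤ (2 : ℝ) ^ k := pow_le_pow_left₀ (abs_nonneg _) (abs_Msum_upd_sub_le σ huv s t) k
    _ ≤ 2 ^ 2 := pow_le_pow_right₀ (by norm_num) hk
    _ = 4 := by norm_num

theorem wCond_nonneg {N : ℕ} (J h : ℝ) (S : Config N → Prop) (σ : Config N) :
    0 ≤ wCond N J h S σ :=
  Set.indicator_nonneg (fun _ _ => wConf_nonneg J h _) σ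

theorem EL_le_mul_probL {N : ℕ} (J h : ℝ) (S A : Config N → Prop) (f : Config N → ℝ) {K : ℝ}
    (hzero : ∀ σ, S σ → wConf N J h σ ≠ 0 → ¬ A σ → f σ ≤ 0)
    (hle : ∀ σ, S σ → wConf N J h σ ≠ 0 → f σ ≤ K) :
    EL N J h S f ≤ K * probL N J h S A := by
  classical
  rw [EL, probL, ← mul_div_assoc, Finset.mul_sum]
  refine div_le_div_of_nonneg_right (Finset.sum_le_sum fun σ _ => ?_)
    (Finset.sum_nonneg fun σ _ => wCond_nonneg J h S σ)
  have hnn := wCond_nonneg J h S σ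
  rcases hnn.eq_or_lt with h0 | hpos
  · simp [Set.indicator_apply, ← h0]
  · have hne : wCond N J h S σ ≠ 0 := hpos.ne'
    have hS : S σ := Set.mem_of_indicator_ne_zero hne
    have hw : wConf N J h σ ≠ 0 := by
      rwa [wCond, Set.indicator_of_mem (show σ ∈ {σ | S σ} from hS)] at hne
    by_cases hA : A σ
    · rw [Set.indicator_of_mem (show σ ∈ {σ | A σ} from hA), mul_comm]
      exact mul_le_mul_of_nonneg_right (hle σ hS hw) hnn
    · rw [Set.indicator_of_notMem (show σ ∉ {σ | A σ} from hA), mul_zero]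
      exact mul_nonpos_of_nonneg_of_nonpos hnn (hzero σ hS hw hA)

/-- Conditional moment computations along the critical line: under the
conditioned measure `ℙ_ℓ = ℙ(·|S_ℓ)` with the conditionally resampled exchangeable pair,
`E_ℓ[(M - M')^k | M] = L_k(m(σ)) + R_k(m(σ)) + T_{ℓ,k}(m(σ))`, where `R_k` are the error
functions of the unconditioned computation (with `|R_k| ≤ K/N` on `[0,1]`) and
`E_ℓ|T_{ℓ,k}(m(σ))| ≤ K ℙ_ℓ(σ ∈ S_ℓ'')`. -/
theorem stmt17 (J h : ℝ) (hJ : 0 ≤ J) (ξ : ℝ) (hξ : ξ ∈ Set.Ioo (0:ℝ) 1) :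
    ∃ K : ℝ, ∀ N : ℕ, 1 ≤ N → ∀ l : ℕ, l = 1 ∨ l = 2 → ∀ k : ℕ, k = 1 ∨ k = 2 →
      let S : Config N → Prop := fun σ => if l = 1 then mConf σ < ξ else ξ < mConf σ
      let S'' : Config N → Prop := fun σ =>
        if l = 1 then ξ * N - 2 ≤ (Msum σ : ℝ) ∧ (Msum σ : ℝ) < ξ * N
        else ξ * N < (Msum σ : ℝ) ∧ (Msum σ : ℝ) ≤ ξ * N + 2
      let Lk : ℝ → ℝ := if k = 1 then Lone J h else Ltwo J h
      ∃ R T : ℝ → ℝ,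
        (∀ m ∈ Set.Icc (0:ℝ) 1, |R m| ≤ K / N) ∧
        (∀ σ : Config N, wConf N J h σ ≠ 0 →
          condE2 N J h (fun σ σ' => ((Msum σ : ℝ) - (Msum σ' : ℝ))^k) σ
            = Lk (mConf σ) + R (mConf σ)) ∧
        (∀ σ : Config N, S σ → wConf N J h σ ≠ 0 →
          condE2L N J h S (fun σ σ' => ((Msum σ : ℝ) - (Msum σ' : ℝ))^k) σ
            = Lk (mConf σ) + R (mConf σ) + T (mConf σ)) ∧
        EL N J h S (fun σ => |T (mConf σ)|) ≤ K * probL N J h S S'' := by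
  refine ⟨16 + 8 * ratioConst J h, ?_⟩
  intro N hN l hl k hk S S'' Lk
  have hC := ratioConst_nonneg hJ h
  have hN0 : (0 : ℝ) < N := by exact_mod_cast hN
  have hk₀ : k ≠ 0 := by omega
  have hk₂ : k ≤ 2 := by omega
  have hmI : ∀ σ : Config N, mConf σ ≤ 1 := fun σ =>
    div_le_one_of_le₀ (by exact_mod_cast Msum_le σ) hN0.le
  have hLk : ∀ m : ℝ, m ≤ 1 → Lk m
      = m ^ 2 * (2 ^ k * ((1 - m) / ((1 - m) + Real.exp (2 * tauFun J h m))))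
        + (1 - m) ^ 2
          * ((-2) ^ k * (1 - (1 - m) / ((1 - m) + Real.exp (2 * tauFun J h m)))) := by
    intro m hm
    rcases hk with rfl | rfl
    · exact Lone_eq J h m hm
    · exact Ltwo_eq J h m hm
  obtain ⟨g, hg⟩ := exists_profile (W := wConf N J h) fun _ _ hM => wConf_congr J h hM
  have hScongr : ∀ σ σ' : Config N, Msum σ = Msum σ' → (S σ ↔ S σ') := fun σ σ' hM => by
    simp only [S, mConf, hM]
  obtain ⟨gS, hgS⟩ := exists_profile (W := wCond N J h S) fun σ σ' hM => by
    by_cases hσ : S σ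
    · rw [wCond, wCond, Set.indicator_of_mem (show σ ∈ {σ | S σ} from hσ),
        Set.indicator_of_mem (show σ' ∈ {σ | S σ} from (hScongr σ σ' hM).mp hσ),
        wConf_congr J h hM]
    · rw [wCond, wCond, Set.indicator_of_notMem (show σ ∉ {σ | S σ} from hσ),
        Set.indicator_of_notMem (show σ' ∉ {σ | S σ} from fun hσ' =>
          hσ ((hScongr σ σ' hM).mpr hσ'))]
  have hmean : ∀ σ : Config N,
      condE2 N J h (fun σ σ' => ((Msum σ : ℝ) - (Msum σ' : ℝ)) ^ k) σ
        = momentProfile N g k (Msum σ) := resampleMean_eq_momentProfile hg k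
  have hmeanS : ∀ σ : Config N,
      condE2L N J h S (fun σ σ' => ((Msum σ : ℝ) - (Msum σ' : ℝ)) ^ k) σ
        = momentProfile N gS k (Msum σ) := resampleMean_eq_momentProfile hgS k
  -- Away from the boundary layer, the conditioning does not affect the resampling.
  have hinterior : ∀ σ : Config N, S σ → ¬ S'' σ →
      momentProfile N gS k (Msum σ) = momentProfile N g k (Msum σ) := by
    intro σ hσ hσ''
    rw [← hmean, ← hmeanS, condE2_eq_resampleMean, condE2L_eq_resampleMean]
    refine resampleMean_congr _ fun u v huv s t => Set.indicator_of_mem ?_ _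
    have habs := abs_le.mp (abs_Msum_upd_sub_le σ huv s t)
    change S (upd σ u v s t)
    rcases hl with rfl | rfl
    · simp only [S, S'', if_true, mConf, div_lt_iff₀ hN0, not_and] at hσ hσ'' ⊢
      by_contra hcon
      exact hσ'' (by linarith [habs.1]) hσ
    · simp only [S, S'', if_neg (show ¬ (2 = 1) by decide), mConf, lt_div_iff₀ hN0, not_and]
        at hσ hσ'' ⊢
      linarith [hσ'' hσ |> not_le.mp, habs.2]
  classical
  refine ⟨fun m => if ∃ σ : Config N, wConf N J h σ ≠ 0 ∧ mConf σ = m then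
      momentProfile N g k ⌊m * N⌋₊ - Lk m else 0,
    fun m => momentProfile N gS k ⌊m * N⌋₊ - momentProfile N g k ⌊m * N⌋₊, ?_, ?_, ?_, ?_⟩
  · intro m _
    dsimp only
    split_ifs with hm
    · obtain ⟨σ, hσ, rfl⟩ := hm
      rw [floor_mConf_mul hN, hLk _ (hmI σ)]
      refine (abs_momentProfile_sub_le hJ hN hg hk₀ (Msum_le σ) (hg σ ▸ hσ) rfl).trans ?_
      have h2k : (2 : ℝ) ^ k ≤ 2 ^ 2 := pow_le_pow_right₀ (by norm_num) hk₂
      gcongr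
      nlinarith
    · rw [abs_zero]
      positivity
  · intro σ hσ
    dsimp only
    rw [if_pos ⟨σ, hσ, rfl⟩, floor_mConf_mul hN, hmean]
    ring
  · intro σ _ hσ
    dsimp only
    rw [if_pos ⟨σ, hσ, rfl⟩, floor_mConf_mul hN, hmeanS]
    ring
  · refine EL_le_mul_probL J h S S'' _ (fun σ hσ _ hσ'' => ?_) fun σ _ _ => ?_
    · dsimp only
      rw [floor_mConf_mul hN, hinterior σ hσ hσ'', sub_self, abs_zero]
    · dsimp only
      rw [floor_mConf_mul hN, ← hmean, ← hmeanS]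
      have h₁ := abs_resampleMean_moment_le (wConf_nonneg (N := N) J h) hk₂ σ
      have h₂ := abs_resampleMean_moment_le (wCond_nonneg J h S) hk₂ σ
      rw [← condE2_eq_resampleMean] at h₁
      rw [← condE2L_eq_resampleMean] at h₂
      refine (abs_sub _ _).trans ?_
      linarith
end

section
/- Suppose 𝑝̃ has exactly two maximizers m₁ < m₂ on [0,1], each satisfying m_ℓ = g(τ(m_ℓ)) and 𝑝̃''(m_ℓ) < 0, and fix ξ ∈ (m₁,m₂). Assume that ℙ(S_ℓ) converges to some p_ℓ > 0 as N → ∞, for ℓ = 1,2. Set W_ℓ = (M − N·m_ℓ)/N^{1/2}, where M = ∑σ_i and σ is drawn from the conditioned measure ℙ_ℓ. Then there exists a constant K such that E_ℓ[W_ℓ²] ≤ K for all N ≥ 1. -/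
open Real Finset MeasureTheory

/-! ### Counting dimer configurations -/

/-- A dimer configuration, seen as a permutation. -/
def Dimer.toPerm {N : ℕ} (D : Dimer N) : Equiv.Perm (Fin N) :=
  ⟨D.1, D.1, D.2, D.2⟩

theorem Dimer.cycleType_toPerm {N : ℕ} (D : Dimer N) :
    D.toPerm.cycleType = Multiset.replicate D.toPerm.cycleType.card 2 := by
  have : Fact (Nat.Prime 2) := ⟨Nat.prime_two⟩
  refine Multiset.eq_replicate.mpr ⟨rfl, Equiv.Perm.pow_prime_eq_one_iff.mp ?_⟩
  ext i
  simp [pow_two, Dimer.toPerm, D.2]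

theorem Dimer.card_monomers_add {N : ℕ} (D : Dimer N) :
    (monomers D).card + 2 * D.toPerm.cycleType.card = N := by
  have hsum := D.toPerm.sum_cycleType
  rw [D.cycleType_toPerm, Multiset.sum_replicate, smul_eq_mul] at hsum
  have hcompl : monomers D = D.toPerm.supportᶜ := by
    ext i
    simp [monomers, Dimer.toPerm]
  have hle := Finset.card_le_univ D.toPerm.support
  rw [hcompl, Finset.card_compl, Fintype.card_fin]
  rw [Fintype.card_fin] at hle
  omega

theorem card_dimer_mul {N d : ℕ} (hd : 2 * d ≤ N) :
    (univ.filter fun D : Dimer N => (monomers D).card = N - 2 * d).card *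
      ((N - 2 * d).factorial * 2 ^ d * d.factorial) = N.factorial := by
  have hcard : (univ.filter fun D : Dimer N => (monomers D).card = N - 2 * d).card =
      (univ.filter fun g : Equiv.Perm (Fin N) =>
        g.cycleType = Multiset.replicate d 2).card := by
    refine Finset.card_bij (fun D _ => D.toPerm) ?_ ?_ ?_
    · intro D hD
      have h1 := D.card_monomers_add
      simp only [mem_filter, mem_univ, true_and] at hD ⊢
      rw [D.cycleType_toPerm]
      congr 1
      omega
    · intro D _ D' _ h
      apply Subtype.ext
      funext i
      exact congrArg (fun g : Equiv.Perm (Fin N) => g i) h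
    · intro g hg
      simp only [mem_filter, mem_univ, true_and] at hg
      have : Fact (Nat.Prime 2) := ⟨Nat.prime_two⟩
      have hg2 : g ^ 2 = 1 := Equiv.Perm.pow_prime_eq_one_iff.mpr
        (by rw [hg]; exact fun c hc => Multiset.eq_of_mem_replicate hc)
      let D : Dimer N := ⟨g, fun i => by
        have := congrArg (fun g : Equiv.Perm (Fin N) => g i) hg2
        simpa [pow_two] using this⟩
      have hD : D.toPerm = g := by ext i; rfl
      refine ⟨D, ?_, hD⟩
      have h1 := D.card_monomers_add
      rw [hD, hg, Multiset.card_replicate] at h1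
      simp only [mem_filter, mem_univ, true_and]
      omega
  have key := Equiv.Perm.card_of_cycleType_mul_eq (Fin N) (Multiset.replicate d 2)
  rw [hcard]
  rw [if_pos ⟨by simpa [mul_comm] using hd,
    fun a ha => (Multiset.eq_of_mem_replicate ha).ge⟩] at key
  rw [Fintype.card_fin, Multiset.sum_replicate, Multiset.prod_replicate, smul_eq_mul,
    mul_comm d 2] at key
  rw [← key]
  congr 2
  rcases Nat.eq_zero_or_pos d with rfl | hd0
  · simp
  · rw [Multiset.toFinset_replicate, if_neg hd0.ne']
    simp

/-- The total Curie–Weiss weight of the configurations with `N - 2 * d` monomers. -/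
noncomputable def levelWeight (N : ℕ) (J h : ℝ) (d : ℕ) : ℝ :=
  ((univ.filter fun D : Dimer N => (monomers D).card = N - 2 * d).card : ℝ) *
    Real.exp (N * (J * (((N - 2 * d : ℕ) : ℝ) / N) ^ 2
      + bIMD N J h * (((N - 2 * d : ℕ) : ℝ) / N)))

theorem sum_wConf_mul (N : ℕ) (J h : ℝ) (F : ℕ → ℝ) :
    ∑ σ : Config N, wConf N J h σ * F (Msum σ) =
      ∑ d ∈ range (N / 2 + 1), levelWeight N J h d * F (N - 2 * d) := by
  set G : ℕ → ℝ := fun k =>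
    Real.exp (N * (J * ((k : ℝ) / N) ^ 2 + bIMD N J h * ((k : ℝ) / N))) * F k with hG
  have h1 : ∀ σ : Config N, wConf N J h σ * F (Msum σ) =
      ∑ D : Dimer N, if monomers D = ASet σ then G (monomers D).card else 0 := by
    intro σ
    have : ∀ D : Dimer N, (if monomers D = ASet σ then G (monomers D).card else 0) =
        if monomers D = ASet σ then G (Msum σ) else 0 := by
      intro D
      split_ifs with hD
      · rw [hD]; rfl
      · rfl
    simp_rw [this]
    rw [← Finset.sum_filter, Finset.sum_const, nsmul_eq_mul, hG]
    simp only [wConf, Dcount, mConf]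
    ring
  have h2 : ∀ D : Dimer N, (∑ σ : Config N,
      if monomers D = ASet σ then G (monomers D).card else 0) = G (monomers D).card := by
    intro D
    rw [Finset.sum_eq_single (fun i => decide (i ∈ monomers D))]
    · rw [if_pos]
      ext i
      simp [ASet]
    · intro σ _ hσ
      rw [if_neg]
      intro hD
      apply hσ
      funext i
      rw [hD]
      simp [ASet]
    · simp
  simp_rw [h1]
  rw [Finset.sum_comm]
  simp_rw [h2]
  rw [← Finset.sum_fiberwise_of_maps_to (s := univ) (t := range (N / 2 + 1))
    (g := fun D : Dimer N => D.toPerm.cycleType.card)]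
  · refine Finset.sum_congr rfl fun d hd => ?_
    have hd' : 2 * d ≤ N := by
      have := Finset.mem_range.mp hd
      omega
    have hset : (univ.filter fun D : Dimer N => D.toPerm.cycleType.card = d) =
        univ.filter fun D : Dimer N => (monomers D).card = N - 2 * d := by
      ext D
      have := D.card_monomers_add
      simp only [mem_filter, mem_univ, true_and]
      omega
    rw [hset, Finset.sum_congr rfl (g := fun _ => G (N - 2 * d)), Finset.sum_const,
      nsmul_eq_mul, hG, levelWeight]
    · ring
    · intro D hD
      rw [(Finset.mem_filter.mp hD).2]
  · intro D _
    have := D.card_monomers_add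
    rw [Finset.mem_range]
    omega

/-! ### Stirling bounds for the level weights -/

theorem exp_mul_log_sub (n : ℕ) :
    Real.exp (n * Real.log n - n) = ((n : ℝ) / Real.exp 1) ^ n := by
  rcases Nat.eq_zero_or_pos n with rfl | hn
  · simp
  · have hn' : (0 : ℝ) < n := by exact_mod_cast hn
    rw [← Real.exp_log (show 0 < ((n : ℝ) / Real.exp 1) ^ n by positivity), Real.log_pow,
      Real.log_div hn'.ne' (Real.exp_pos 1).ne', Real.log_exp]
    ring_nf

theorem sqrt_mul_exp_le_factorial (n : ℕ) :
    √((n : ℝ) + 1) * Real.exp (n * Real.log n - n) ≤ n.factorial := by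
  rw [exp_mul_log_sub]
  rcases Nat.eq_zero_or_pos n with rfl | hn
  · simp
  · refine le_trans ?_ (Stirling.le_factorial_stirling n)
    have hn' : (1 : ℝ) ≤ n := by exact_mod_cast hn
    gcongr
    nlinarith [Real.pi_gt_three]

theorem factorial_le_sqrt_mul_exp (n : ℕ) :
    (n.factorial : ℝ) ≤ Real.exp 1 * (√((n : ℝ) + 1) * Real.exp (n * Real.log n - n)) := by
  rw [exp_mul_log_sub]
  rcases Nat.eq_zero_or_pos n with rfl | hn
  · simp
  · obtain ⟨k, rfl⟩ : ∃ k, n = k + 1 := ⟨n - 1, by omega⟩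
    have h := Stirling.stirlingSeq'_antitone (Nat.zero_le k)
    simp only [Function.comp, Nat.succ_eq_add_one, zero_add, Stirling.stirlingSeq_one] at h
    rw [Stirling.stirlingSeq, div_le_iff₀ (by positivity), Real.sqrt_mul (by norm_num)] at h
    have h2 : (√2 : ℝ) ≠ 0 := by positivity
    calc ((k + 1).factorial : ℝ) ≤ _ := h
      _ = Real.exp 1 * (√((k + 1 : ℕ) : ℝ) * (((k + 1 : ℕ) : ℝ) / Real.exp 1) ^ (k + 1)) := by
        field_simp
      _ ≤ _ := by
        gcongr
        linarith

/-- The exponential rate of the weight of the configurations with monomer density `x`. -/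
noncomputable def rateFun (J h x : ℝ) : ℝ :=
  -(x * Real.log x) - (1 - x) / 2 * Real.log (1 - x) + (x - 1) / 2 + x * tauFun J h x - J * x ^ 2

theorem mul_log_mul {a : ℝ} (ha : 0 < a) (x : ℝ) :
    a * x * Real.log (a * x) = a * x * Real.log a + a * (x * Real.log x) := by
  rcases eq_or_ne x 0 with rfl | hx
  · simp
  · rw [Real.log_mul ha.ne' hx]
    ring

/-- The factor of `levelWeight` that does not depend on the level. -/
noncomputable def levelNorm (N : ℕ) : ℝ :=
  N.factorial * Real.exp (N - N / 2 * Real.log N)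

theorem levelNorm_pos (N : ℕ) : 0 < levelNorm N := by
  unfold levelNorm
  positivity

theorem levelNorm_mul_exp (J h : ℝ) {N k d : ℕ} (hN : 0 < N) (hk : k + 2 * d = N) :
    levelNorm N * Real.exp (N * rateFun J h ((k : ℝ) / N)) =
      N.factorial * Real.exp (N * (J * ((k : ℝ) / N) ^ 2 + bIMD N J h * ((k : ℝ) / N))) /
        (Real.exp (k * Real.log k - k) * 2 ^ d * Real.exp (d * Real.log d - d)) := by
  have hN' : (0 : ℝ) < N := by exact_mod_cast hN
  set x : ℝ := (k : ℝ) / N with hx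
  have hkx : (k : ℝ) = N * x := by rw [hx]; field_simp
  have hdx : (d : ℝ) = N / 2 * (1 - x) := by
    have : (k : ℝ) + 2 * d = N := by exact_mod_cast hk
    linarith
  have h2 : (2 : ℝ) ^ d = Real.exp (d * Real.log 2) := by
    rw [mul_comm, Real.exp_mul, Real.exp_log (by norm_num), Real.rpow_natCast]
  rw [h2, levelNorm, mul_assoc, mul_div_assoc, ← Real.exp_add, ← Real.exp_add, ← Real.exp_add,
    ← Real.exp_sub]
  congr 2
  rw [hkx, hdx, mul_log_mul hN', mul_log_mul (by positivity), Real.log_div hN'.ne' (by norm_num)]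
  unfold rateFun bIMD tauFun
  ring

theorem levelWeight_bounds (J h : ℝ) {N k d : ℕ} (hN : 0 < N) (hk : k + 2 * d = N) :
    levelWeight N J h d ≤
      levelNorm N * Real.exp (N * rateFun J h ((k : ℝ) / N)) / (√((k : ℝ) + 1) * √((d : ℝ) + 1)) ∧
    levelNorm N * Real.exp (N * rateFun J h ((k : ℝ) / N)) / (√((k : ℝ) + 1) * √((d : ℝ) + 1)) ≤
      Real.exp 1 ^ 2 * levelWeight N J h d := by
  rw [levelNorm_mul_exp J h hN hk]
  have hkd : N - 2 * d = k := by omega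
  have hcard := card_dimer_mul (N := N) (d := d) (by omega)
  rw [hkd] at hcard
  have hcard' : ((univ.filter fun D : Dimer N => (monomers D).card = k).card : ℝ) =
      N.factorial / (k.factorial * 2 ^ d * d.factorial) := by
    rw [eq_div_iff (by positivity)]
    exact_mod_cast hcard
  rw [levelWeight, hkd, hcard']
  set E := Real.exp (N * (J * ((k : ℝ) / N) ^ 2 + bIMD N J h * ((k : ℝ) / N))) with hE
  have hEpos : 0 < E := Real.exp_pos _
  have k1 := sqrt_mul_exp_le_factorial k
  have k2 := factorial_le_sqrt_mul_exp k
  have d1 := sqrt_mul_exp_le_factorial d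
  have d2 := factorial_le_sqrt_mul_exp d
  set a := Real.exp (k * Real.log k - k) with ha
  set b := Real.exp (d * Real.log d - d) with hb
  have hapos : 0 < a := Real.exp_pos _
  have hbpos : 0 < b := Real.exp_pos _
  have hsk : 0 < √((k : ℝ) + 1) := by positivity
  have hsd : 0 < √((d : ℝ) + 1) := by positivity
  set s := √((k : ℝ) + 1)
  set t := √((d : ℝ) + 1)
  have e1 : (N.factorial : ℝ) * E / (a * 2 ^ d * b) / (s * t) =
      N.factorial * E / ((s * a) * 2 ^ d * (t * b)) := by
    rw [div_div]
    congr 1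
    ring
  have e2 : (N.factorial : ℝ) / (k.factorial * 2 ^ d * d.factorial) * E =
      N.factorial * E / (k.factorial * 2 ^ d * d.factorial) := by ring
  rw [e1, e2]
  constructor
  · gcongr
  · rw [mul_div_assoc', div_le_div_iff₀ (by positivity) (by positivity)]
    have hfac : (k.factorial : ℝ) * 2 ^ d * d.factorial ≤
        (Real.exp 1 * (s * a)) * 2 ^ d * (Real.exp 1 * (t * b)) := by gcongr
    calc (N.factorial : ℝ) * E * (k.factorial * 2 ^ d * d.factorial)
        ≤ N.factorial * E * ((Real.exp 1 * (s * a)) * 2 ^ d * (Real.exp 1 * (t * b))) := by gcongr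
      _ = _ := by ring

/-! ### Comparison of the rate function with `ptilde` -/

theorem gFun_sq (y : ℝ) : gFun y ^ 2 = (1 - gFun y) * Real.exp (2 * y) := by
  have h4 : Real.exp (4 * y) = Real.exp (2 * y) ^ 2 := by
    rw [← Real.exp_nat_mul]
    ring_nf
  have hs := Real.sq_sqrt (show 0 ≤ Real.exp (4 * y) + 4 * Real.exp (2 * y) by positivity)
  unfold gFun
  rw [h4] at hs ⊢
  linear_combination hs / 4

theorem gFun_pos (y : ℝ) : 0 < gFun y := by
  have h4 : Real.exp (4 * y) = Real.exp (2 * y) ^ 2 := by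
    rw [← Real.exp_nat_mul]
    ring_nf
  have : Real.exp (2 * y) < √(Real.exp (4 * y) + 4 * Real.exp (2 * y)) := by
    apply Real.lt_sqrt_of_sq_lt
    rw [h4]
    linarith [Real.exp_pos (2 * y)]
  unfold gFun
  linarith

theorem gFun_lt_one (y : ℝ) : gFun y < 1 := by
  have h1 := gFun_sq y
  have h2 := gFun_pos y
  by_contra hcon
  nlinarith [Real.exp_pos (2 * y), mul_nonneg (sub_nonneg.mpr (not_lt.mp hcon))
    (Real.exp_pos (2 * y)).le]

theorem log_gFun (y : ℝ) : y = Real.log (gFun y) - Real.log (1 - gFun y) / 2 := by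
  have hg := gFun_pos y
  have hg' : 0 < 1 - gFun y := by linarith [gFun_lt_one y]
  have h := congrArg Real.log (gFun_sq y)
  rw [Real.log_pow, Real.log_mul hg'.ne' (Real.exp_pos _).ne', Real.log_exp] at h
  push_cast at h
  linarith

theorem contDiff_gFun : ContDiff ℝ 2 gFun := by
  unfold gFun
  refine ContDiff.div_const (ContDiff.sub (ContDiff.sqrt (by fun_prop) ?_) (by fun_prop)) _
  intro x
  positivity

theorem contDiff_ptilde (J h : ℝ) : ContDiff ℝ 2 (ptilde J h) := by
  have hg : ContDiff ℝ 2 fun m => gFun (tauFun J h m) :=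
    contDiff_gFun.comp (by unfold tauFun; fun_prop)
  have hlog : ContDiff ℝ 2 fun m => Real.log (1 - gFun (tauFun J h m)) :=
    ContDiff.log (contDiff_const.sub hg) fun m => by linarith [gFun_lt_one (tauFun J h m)]
  unfold ptilde
  fun_prop

theorem mul_log_sub_le {x g : ℝ} (hx : 0 ≤ x) (hg : 0 < g) :
    x * Real.log g - x * Real.log x ≤ g - x := by
  rcases hx.eq_or_lt with rfl | hx
  · simpa using hg.le
  · have h := Real.log_le_sub_one_of_pos (div_pos hg hx)
    rw [Real.log_div hg.ne' hx.ne'] at h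
    calc x * Real.log g - x * Real.log x = x * (Real.log g - Real.log x) := by ring
      _ ≤ x * (g / x - 1) := by gcongr
      _ = g - x := by field_simp

theorem mul_log_sub_le_sq {x m : ℝ} (hx : 0 ≤ x) (hm : 0 < m) :
    x * Real.log x - x * Real.log m ≤ (x - m) + (x - m) ^ 2 / m := by
  rcases hx.eq_or_lt with rfl | hx
  · have : (0 - m) + (0 - m) ^ 2 / m = 0 := by field_simp; ring
    rw [this]
    simp
  · have h := Real.log_le_sub_one_of_pos (div_pos hx hm)
    rw [Real.log_div hx.ne' hm.ne'] at h
    calc x * Real.log x - x * Real.log m = x * (Real.log x - Real.log m) := by ring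
      _ ≤ x * (x / m - 1) := by gcongr
      _ = _ := by field_simp; ring

theorem rateFun_le_ptilde (J h : ℝ) {x : ℝ} (hx : x ∈ Set.Icc (0 : ℝ) 1) :
    rateFun J h x ≤ ptilde J h x := by
  have hτ := log_gFun (tauFun J h x)
  have hg := gFun_pos (tauFun J h x)
  have hg' := gFun_lt_one (tauFun J h x)
  unfold rateFun ptilde
  set τ := tauFun J h x
  set g := gFun τ
  have h1 := mul_log_sub_le hx.1 hg
  have h2 := mul_log_sub_le (x := 1 - x) (g := 1 - g) (by linarith [hx.2]) (by linarith)
  rw [hτ]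
  nlinarith

theorem ptilde_sub_le_rateFun (J h : ℝ) {m x : ℝ} (hfix : m = gFun (tauFun J h m))
    (hx : x ∈ Set.Icc (0 : ℝ) 1) (hJ : 0 ≤ J) :
    ptilde J h m - (1 / m + 1 / (2 * (1 - m))) * (x - m) ^ 2 ≤ rateFun J h x := by
  have hτ := log_gFun (tauFun J h m)
  have hg := gFun_pos (tauFun J h m)
  have hg' := gFun_lt_one (tauFun J h m)
  unfold rateFun ptilde
  rw [← hfix] at hτ hg hg' ⊢
  have h1 := mul_log_sub_le_sq hx.1 hg
  have h2 := mul_log_sub_le_sq (x := 1 - x) (m := 1 - m) (by linarith [hx.2]) (by linarith)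
  have hτx : tauFun J h x = tauFun J h m + 2 * J * (x - m) := by unfold tauFun; ring
  have e : (1 / m + 1 / (2 * (1 - m))) * (x - m) ^ 2 =
      (x - m) ^ 2 / m + (1 - x - (1 - m)) ^ 2 / (1 - m) / 2 := by
    have : (1 - m) ≠ 0 := by linarith
    field_simp
    ring
  rw [e, hτx, hτ]
  nlinarith [mul_nonneg hJ (sq_nonneg (x - m))]

/-! ### Quadratic decay and Gaussian sums -/

theorem exists_quadratic_decay {f : ℝ → ℝ} (hf : ContDiff ℝ 2 f) {a b m : ℝ}
    (hloc : IsLocalMax f m) (hc : iteratedDeriv 2 f m < 0)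
    (hlt : ∀ x ∈ Set.Icc a b, x ≠ m → f x < f m) :
    ∃ c : ℝ, 0 < c ∧ ∀ x ∈ Set.Icc a b, f x ≤ f m - c * (x - m) ^ 2 := by
  set D := iteratedDeriv 2 f m with hD
  have hT : ∀ x, taylorWithinEval f 2 Set.univ m x = f m + D / 2 * (x - m) ^ 2 := by
    intro x
    rw [taylorWithinEval_succ, taylorWithinEval_succ, taylor_within_zero_eval]
    simp only [iteratedDerivWithin_univ, zero_add, iteratedDeriv_one, hloc.deriv_eq_zero]
    norm_num [← hD]
    ring
  have hev := (taylor_isLittleO_univ (x₀ := m) (n := 2) hf).def (c := -D / 4) (by linarith)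
  obtain ⟨δ, hδ, hball⟩ := Metric.eventually_nhds_iff.mp hev
  have hnear : ∀ x, |x - m| < δ → f x ≤ f m - (-D / 4) * (x - m) ^ 2 := by
    intro x hx
    have h := hball (y := x) (by rwa [Real.dist_eq])
    rw [hT, Real.norm_eq_abs, Real.norm_eq_abs, abs_of_nonneg (sq_nonneg (x - m))] at h
    have := (abs_le.mp h).2
    nlinarith
  set K : Set ℝ := Set.Icc a b \ Metric.ball m δ with hK
  have hKc : IsCompact K := isCompact_Icc.diff Metric.isOpen_ball
  rcases K.eq_empty_or_nonempty with hKe | hKn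
  · refine ⟨-D / 4, by linarith, fun x hx => hnear x ?_⟩
    by_contra hcon
    have : x ∈ K := ⟨hx, by rwa [Metric.mem_ball, Real.dist_eq]⟩
    rw [hKe] at this
    exact this
  · obtain ⟨y, hyK, hy⟩ := hKc.exists_isMaxOn hKn hf.continuous.continuousOn
    have hym : y ≠ m := by
      rintro rfl
      exact hyK.2 (Metric.mem_ball_self hδ)
    have hgap : 0 < f m - f y := sub_pos.mpr (hlt y hyK.1 hym)
    set R : ℝ := (a - m) ^ 2 + (b - m) ^ 2 + 1 with hR
    have hRpos : 0 < R := by positivity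
    refine ⟨min (-D / 4) ((f m - f y) / R), lt_min (by linarith) (by positivity), fun x hx => ?_⟩
    by_cases hxδ : |x - m| < δ
    · have := mul_le_mul_of_nonneg_right (min_le_left (-D / 4) ((f m - f y) / R))
        (sq_nonneg (x - m))
      linarith [hnear x hxδ]
    · have hxy : f x ≤ f y := hy (show x ∈ K from ⟨hx, by rwa [Metric.mem_ball, Real.dist_eq]⟩)
      have hsq : (x - m) ^ 2 ≤ R := by
        rcases le_total x m with hxm | hxm
        · nlinarith [hx.1, sq_nonneg (b - m)]
        · nlinarith [hx.2, sq_nonneg (a - m)]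
      have := mul_le_mul (min_le_right (-D / 4) ((f m - f y) / R)) hsq (sq_nonneg _) (by positivity)
      rw [div_mul_cancel₀ _ hRpos.ne'] at this
      linarith

theorem sum_pow_dist_le {r : ℝ} (hr0 : 0 ≤ r) (hr1 : r < 1) (n M : ℕ) :
    ∑ d ∈ range M, r ^ ((n - d) + (d - n)) ≤ 2 * (1 - r)⁻¹ := by
  have hgeo : ∀ L : ℕ, ∑ j ∈ range L, r ^ j ≤ (1 - r)⁻¹ := fun L => by
    rw [← tsum_geometric_of_lt_one hr0 hr1]
    exact (summable_geometric_of_lt_one hr0 hr1).sum_le_tsum _ fun _ _ => pow_nonneg hr0 _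
  calc ∑ d ∈ range M, r ^ ((n - d) + (d - n))
      ≤ ∑ d ∈ range (n + M), r ^ ((n - d) + (d - n)) :=
        Finset.sum_le_sum_of_subset_of_nonneg (Finset.range_mono (by omega))
          fun _ _ _ => pow_nonneg hr0 _
    _ = ∑ d ∈ range n, r ^ ((n - d) + (d - n)) + ∑ j ∈ range M, r ^ j := by
        rw [Finset.sum_range_add]
        congr 1
        refine Finset.sum_congr rfl fun j _ => ?_
        congr 1
        omega
    _ ≤ ∑ j ∈ range n, r ^ j + ∑ j ∈ range M, r ^ j := by
        gcongr ?_ + _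
        rw [← Finset.sum_range_reflect (fun j => r ^ j)]
        refine Finset.sum_le_sum fun d hd => ?_
        exact pow_le_pow_of_le_one hr0 hr1.le (by omega)
    _ ≤ 2 * (1 - r)⁻¹ := by linarith [hgeo n, hgeo M]

theorem exists_sum_gaussian_le {c : ℝ} (hc : 0 < c) :
    ∃ C : ℝ, 0 < C ∧ ∀ N : ℕ, 1 ≤ N → ∀ M : ℕ, ∀ a : ℝ, 0 ≤ a →
      ∑ d ∈ range M, Real.exp (-(c * ((d : ℝ) - a) ^ 2 / N)) ≤ C * √N := by
  refine ⟨Real.exp (c / 4 + c) * (2 * (1 + 1 / c)), by positivity, fun N hN M a ha => ?_⟩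
  have hN' : (1 : ℝ) ≤ N := by exact_mod_cast hN
  have hq1 : 1 ≤ √(N : ℝ) := Real.one_le_sqrt.mpr hN'
  set q := √(N : ℝ) with hq
  have hqq : (N : ℝ) = q ^ 2 := (Real.sq_sqrt (by positivity)).symm
  set s := c / q with hs
  have hspos : 0 < s := by positivity
  have hsc : s ≤ c := div_le_self hc.le hq1
  set n := ⌊a⌋₊ with hn
  have hna : (n : ℝ) ≤ a := Nat.floor_le ha
  have han : a < n + 1 := Nat.lt_floor_add_one a
  have hterm : ∀ d : ℕ, Real.exp (-(c * ((d : ℝ) - a) ^ 2 / N)) ≤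
      Real.exp (c / 4 + c) * Real.exp (-s) ^ ((n - d) + (d - n)) := by
    intro d
    rw [← Real.exp_nat_mul, ← Real.exp_add]
    apply Real.exp_le_exp.mpr
    have hdist : (((n - d) + (d - n) : ℕ) : ℝ) - 1 ≤ |(d : ℝ) - a| := by
      rcases le_total d n with hdn | hdn
      · rw [Nat.sub_eq_zero_of_le hdn, add_zero, Nat.cast_sub hdn]
        linarith [neg_le_abs ((d : ℝ) - a)]
      · rw [Nat.sub_eq_zero_of_le hdn, zero_add, Nat.cast_sub hdn]
        linarith [le_abs_self ((d : ℝ) - a)]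
    have hsq : |(d : ℝ) - a| / q - 1 / 4 ≤ ((d : ℝ) - a) ^ 2 / N := by
      rw [hqq, ← sq_abs ((d : ℝ) - a), ← div_pow]
      nlinarith [sq_nonneg (|(d : ℝ) - a| / q - 1 / 2)]
    have h1 := mul_le_mul_of_nonneg_left hsq hc.le
    have h2 := mul_le_mul_of_nonneg_left hdist hspos.le
    have e1 : c * (|(d : ℝ) - a| / q - 1 / 4) = s * |(d : ℝ) - a| - c / 4 := by
      rw [hs]
      ring
    have e2 : c * (((d : ℝ) - a) ^ 2 / N) = c * ((d : ℝ) - a) ^ 2 / N := by ring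
    rw [e1, e2] at h1
    nlinarith
  have hr1 : Real.exp (-s) < 1 := by simpa using hspos
  have hinv : (1 - Real.exp (-s))⁻¹ ≤ 1 + 1 / s := by
    rw [inv_le_iff_one_le_mul₀ (by linarith)]
    have hs1 : 1 + s ≤ Real.exp s := by linarith [Real.add_one_le_exp s]
    have hle : Real.exp (-s) ≤ 1 / (1 + s) := by
      rw [Real.exp_neg, ← one_div]
      gcongr
    have : (1 + 1 / s) * (1 - 1 / (1 + s)) = 1 := by field_simp; ring
    calc (1 : ℝ) = (1 + 1 / s) * (1 - 1 / (1 + s)) := this.symm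
      _ ≤ (1 + 1 / s) * (1 - Real.exp (-s)) := by gcongr
  calc ∑ d ∈ range M, Real.exp (-(c * ((d : ℝ) - a) ^ 2 / N))
      ≤ ∑ d ∈ range M, Real.exp (c / 4 + c) * Real.exp (-s) ^ ((n - d) + (d - n)) :=
        Finset.sum_le_sum fun d _ => hterm d
    _ ≤ Real.exp (c / 4 + c) * (2 * (1 + 1 / s)) := by
        rw [← Finset.mul_sum]
        gcongr
        exact (sum_pow_dist_le (Real.exp_pos _).le hr1 n M).trans (by linarith)
    _ ≤ Real.exp (c / 4 + c) * (2 * ((1 + 1 / c) * q)) := by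
        gcongr
        have : 1 / s = 1 / c * q := by rw [hs]; field_simp
        rw [this]
        linarith
    _ = _ := by ring

theorem mul_exp_neg_le {c : ℝ} (hc : 0 < c) (t : ℝ) :
    t * Real.exp (-(c * t)) ≤ 2 / c * Real.exp (-(c / 2 * t)) := by
  have h : c / 2 * t ≤ Real.exp (c / 2 * t) := by linarith [Real.add_one_le_exp (c / 2 * t)]
  have e : Real.exp (-(c / 2 * t)) = Real.exp (c / 2 * t) * Real.exp (-(c * t)) := by
    rw [← Real.exp_add]
    ring_nf
  rw [e, ← mul_assoc]
  gcongr
  rw [div_mul_eq_mul_div, le_div_iff₀ hc]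
  linarith

/-- Away from density `m` a Gaussian factor compensates the missing decay of the
Stirling prefactor. -/
theorem exists_le_sqrt_mul_exp {m c : ℝ} (hm0 : 0 < m) (hm1 : m < 1) (hc : 0 < c) :
    ∃ C : ℝ, 0 < C ∧ ∀ N k d : ℕ, 1 ≤ N → k + 2 * d = N →
      (N : ℝ) ≤ C * (√((k : ℝ) + 1) * √((d : ℝ) + 1)) *
        Real.exp (c * (N * ((k : ℝ) / N - m) ^ 2)) := by
  set δ := min (m / 2) ((1 - m) / 2) with hδ
  have hδpos : 0 < δ := lt_min (by linarith) (by linarith)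
  refine ⟨2 / δ + 1 / (c * δ ^ 2), by positivity, fun N k d hN hk => ?_⟩
  have hN' : (0 : ℝ) < N := by exact_mod_cast hN
  have hkd : (k : ℝ) + 2 * d = N := by exact_mod_cast hk
  have hsk : 1 ≤ √((k : ℝ) + 1) :=
    Real.one_le_sqrt.mpr (by linarith [(Nat.cast_nonneg k : (0 : ℝ) ≤ k)])
  have hsd : 1 ≤ √((d : ℝ) + 1) :=
    Real.one_le_sqrt.mpr (by linarith [(Nat.cast_nonneg d : (0 : ℝ) ≤ d)])
  have hprod : 1 ≤ √((k : ℝ) + 1) * √((d : ℝ) + 1) := one_le_mul_of_one_le_of_one_le hsk hsd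
  set x := (k : ℝ) / N with hx
  have hkx : (k : ℝ) = N * x := by rw [hx]; field_simp
  have hexp : c * (N * (x - m) ^ 2) + 1 ≤ Real.exp (c * (N * (x - m) ^ 2)) :=
    Real.add_one_le_exp _
  by_cases hxm : |x - m| < δ
  · have h1 := (abs_lt.mp hxm)
    have hδ1 : δ ≤ m / 2 := min_le_left _ _
    have hδ2 : δ ≤ (1 - m) / 2 := min_le_right _ _
    have hkN : δ * N ≤ k := by rw [hkx]; nlinarith
    have hdN : δ / 2 * N ≤ d := by nlinarith
    have hroot : δ / 2 * N ≤ √((k : ℝ) + 1) * √((d : ℝ) + 1) := by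
      rw [← Real.sqrt_mul (by positivity)]
      apply Real.le_sqrt_of_sq_le
      have hd0 : 0 ≤ δ / 2 * N := by positivity
      calc (δ / 2 * N) ^ 2 = (δ / 2 * N) * (δ / 2 * N) := by ring
        _ ≤ ((k : ℝ) + 1) * ((d : ℝ) + 1) := by
          apply mul_le_mul <;> nlinarith
    calc (N : ℝ) = 2 / δ * (δ / 2 * N) * 1 := by field_simp
      _ ≤ (2 / δ + 1 / (c * δ ^ 2)) * (√((k : ℝ) + 1) * √((d : ℝ) + 1)) *
          Real.exp (c * (N * (x - m) ^ 2)) := by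
        gcongr
        · linarith [show 0 < 1 / (c * δ ^ 2) by positivity]
        · exact Real.one_le_exp (by positivity)
  · have hsq : δ ^ 2 ≤ (x - m) ^ 2 := by
      rw [← sq_abs (x - m)]
      gcongr
      exact not_lt.mp hxm
    calc (N : ℝ) = 1 / (c * δ ^ 2) * 1 * (c * (N * δ ^ 2)) := by field_simp
      _ ≤ (2 / δ + 1 / (c * δ ^ 2)) * (√((k : ℝ) + 1) * √((d : ℝ) + 1)) *
          Real.exp (c * (N * (x - m) ^ 2)) := by
        gcongr
        · linarith [show 0 < 2 / δ by positivity]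
        · have : c * (N * δ ^ 2) ≤ c * (N * (x - m) ^ 2) := by gcongr
          linarith

/-! ### The conditional second moment -/

open Classical in
theorem EL_eq_levelWeight (N : ℕ) (J h m : ℝ) (S : Set ℝ) :
    EL N J h (fun σ => mConf σ ∈ S) (fun σ => (((Msum σ : ℝ) - N * m) / √N) ^ 2) =
      (∑ d ∈ range (N / 2 + 1), if ((N - 2 * d : ℕ) : ℝ) / N ∈ S then
          levelWeight N J h d * ((((N - 2 * d : ℕ) : ℝ) - N * m) / √N) ^ 2 else 0) /
        ∑ d ∈ range (N / 2 + 1), if ((N - 2 * d : ℕ) : ℝ) / N ∈ S then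
          levelWeight N J h d else 0 := by
  have h1 := sum_wConf_mul N J h fun k =>
    if (k : ℝ) / N ∈ S then (((k : ℝ) - N * m) / √N) ^ 2 else 0
  have h2 := sum_wConf_mul N J h fun k => if (k : ℝ) / N ∈ S then 1 else 0
  simp only [mul_ite, mul_zero, mul_one] at h1 h2
  rw [← h1, ← h2]
  unfold EL wCond
  congr 1
  refine Finset.sum_congr rfl fun σ _ => ?_
  simp only [Set.indicator_apply, Set.mem_ofPred_eq, mConf, ite_mul, zero_mul]

theorem levelWeight_nonneg (N : ℕ) (J h : ℝ) (d : ℕ) : 0 ≤ levelWeight N J h d := by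
  unfold levelWeight
  positivity

/-- A lower bound for the total weight of a set of densities around a maximizer `m`. -/
theorem exists_le_sum_levelWeight {J h m : ℝ} (hJ : 0 ≤ J) (hfix : m = gFun (tauFun J h m))
    {S : Set ℝ} [DecidablePred (· ∈ S)] {δ : ℝ} (hδ : 0 < δ) (hS : ∀ x, |x - m| < δ → x ∈ S) :
    ∃ c : ℝ, 0 < c ∧ ∃ N₀ : ℕ, ∀ N : ℕ, 1 ≤ N → N₀ ≤ N →
      c * (levelNorm N * Real.exp (N * ptilde J h m) / √N) ≤
        ∑ d ∈ range (N / 2 + 1), if ((N - 2 * d : ℕ) : ℝ) / N ∈ S then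
          levelWeight N J h d else 0 := by
  have hm0 : 0 < m := hfix ▸ gFun_pos _
  have hm1 : m < 1 := hfix ▸ gFun_lt_one _
  set Q := 1 / m + 1 / (2 * (1 - m)) with hQ
  have hQpos : 0 < Q := by
    have : 0 < 1 - m := by linarith
    positivity
  set ρ := min δ m with hρ
  have hρpos : 0 < ρ := lt_min hδ hm0
  refine ⟨Real.exp (-(16 * Q)) / (2 * Real.exp 1 ^ 2), by positivity, ⌈16 / ρ ^ 2⌉₊ + 1,
    fun N hN hN0 => ?_⟩
  have hN' : (1 : ℝ) ≤ N := by exact_mod_cast hN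
  have hNpos : (0 : ℝ) < N := by linarith
  have hNρ : 16 / ρ ^ 2 < N := by
    have h1 : ((⌈16 / ρ ^ 2⌉₊ + 1 : ℕ) : ℝ) ≤ N := by exact_mod_cast hN0
    push_cast at h1
    linarith [Nat.le_ceil (16 / ρ ^ 2)]
  have hq1 : 1 ≤ √(N : ℝ) := Real.one_le_sqrt.mpr hN'
  have hqq : √(N : ℝ) ^ 2 = N := Real.sq_sqrt (by positivity)
  set q := √(N : ℝ) with hq
  set a := (N : ℝ) * (1 - m) / 2 with ha
  have ha0 : 0 ≤ a := by
    have : 0 < 1 - m := by linarith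
    positivity
  set n := ⌊a⌋₊ with hn
  set L := ⌈q⌉₊ with hL
  have hna : (n : ℝ) ≤ a := Nat.floor_le ha0
  have han : a < n + 1 := Nat.lt_floor_add_one a
  have hLq : q ≤ L := Nat.le_ceil q
  have hLq2 : (L : ℝ) ≤ 2 * q := by linarith [Nat.ceil_lt_add_one (show 0 ≤ q by linarith)]
  have hlevel : ∀ d ∈ Finset.Ico n (n + L), 2 * d ≤ N ∧ ((N - 2 * d : ℕ) : ℝ) / N ∈ S ∧
      levelNorm N * Real.exp (N * ptilde J h m) * (Real.exp (-(16 * Q)) / (2 * Real.exp 1 ^ 2)) / N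
        ≤ levelWeight N J h d := by
    intro d hd
    rw [Finset.mem_Ico] at hd
    have hd1 : (n : ℝ) ≤ d := by exact_mod_cast hd.1
    have hd2 : (d : ℝ) + 1 ≤ n + L := by exact_mod_cast hd.2
    have hda : |(d : ℝ) - a| ≤ 2 * q := by
      rw [abs_le]
      constructor <;> linarith
    have hsq : ((d : ℝ) - a) ^ 2 ≤ 4 * N := by
      rw [← sq_abs, ← hqq]
      nlinarith [abs_nonneg ((d : ℝ) - a)]
    set x := ((N : ℝ) - 2 * d) / N with hx
    have hxm : N * (x - m) = 2 * (a - d) := by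
      rw [hx, ha]
      field_simp
      ring
    have ht : N * (x - m) ^ 2 ≤ 16 := by
      have : N * (N * (x - m) ^ 2) ≤ N * 16 := by
        calc N * (N * (x - m) ^ 2) = (N * (x - m)) ^ 2 := by ring
          _ = 4 * ((d : ℝ) - a) ^ 2 := by rw [hxm]; ring
          _ ≤ N * 16 := by linarith
      exact le_of_mul_le_mul_left this hNpos
    have hclose : |x - m| < ρ := by
      apply abs_lt_of_sq_lt_sq _ hρpos.le
      rw [div_lt_iff₀ (by positivity)] at hNρ
      have : N * (x - m) ^ 2 < N * ρ ^ 2 := by linarith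
      exact lt_of_mul_lt_mul_left this hNpos.le
    have hx0 : 0 < x := by
      have := (abs_lt.mp hclose).1
      linarith [min_le_right δ m]
    have h2d : 2 * d ≤ N := by
      have h3 : 0 < (N : ℝ) - 2 * d := by
        rw [hx] at hx0
        exact (div_pos_iff_of_pos_right hNpos).mp hx0
      have h4 : 2 * (d : ℝ) ≤ N := by linarith
      exact_mod_cast h4
    obtain ⟨k, hk⟩ : ∃ k, k + 2 * d = N := ⟨N - 2 * d, by omega⟩
    have hkN : N - 2 * d = k := by omega
    have hkR : (k : ℝ) + 2 * d = N := by exact_mod_cast hk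
    have hkx : (k : ℝ) / N = x := by rw [hx, ← hkR]; ring
    have hx1 : x ≤ 1 := by
      rw [hx, div_le_one hNpos]
      linarith [(Nat.cast_nonneg d : (0 : ℝ) ≤ d)]
    refine ⟨h2d, ?_, ?_⟩
    · rw [hkN, hkx]
      exact hS x (hclose.trans_le (min_le_left _ _))
    · have hw := (levelWeight_bounds J h hN hk).2
      rw [hkx] at hw
      have hrate := ptilde_sub_le_rateFun J h hfix ⟨hx0.le, hx1⟩ hJ
      have hexp : Real.exp (N * ptilde J h m) * Real.exp (-(16 * Q)) ≤
          Real.exp (N * rateFun J h x) := by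
        rw [← Real.exp_add]
        apply Real.exp_le_exp.mpr
        have h1 := mul_le_mul_of_nonneg_left hrate hNpos.le
        have h2 := mul_le_mul_of_nonneg_left ht hQpos.le
        nlinarith
      have hroot : √((k : ℝ) + 1) * √((d : ℝ) + 1) ≤ 2 * N := by
        rw [← Real.sqrt_mul (by positivity)]
        apply Real.sqrt_le_iff.mpr ⟨by positivity, ?_⟩
        have hd0 : (0 : ℝ) ≤ d := Nat.cast_nonneg d
        have hk0 : (0 : ℝ) ≤ k := Nat.cast_nonneg k
        calc ((k : ℝ) + 1) * ((d : ℝ) + 1) ≤ (2 * N) * (2 * N) := by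
              apply mul_le_mul <;> linarith
          _ = (2 * (N : ℝ)) ^ 2 := by ring
      have hA := levelNorm_pos N
      have hlow : levelNorm N * (Real.exp (N * ptilde J h m) * Real.exp (-(16 * Q))) / (2 * N) ≤
          Real.exp 1 ^ 2 * levelWeight N J h d := by
        refine le_trans ?_ hw
        gcongr
      calc levelNorm N * Real.exp (N * ptilde J h m) *
            (Real.exp (-(16 * Q)) / (2 * Real.exp 1 ^ 2)) / N
          = (Real.exp 1 ^ 2)⁻¹ * (levelNorm N *
            (Real.exp (N * ptilde J h m) * Real.exp (-(16 * Q))) / (2 * N)) := by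
              field_simp
        _ ≤ (Real.exp 1 ^ 2)⁻¹ * (Real.exp 1 ^ 2 * levelWeight N J h d) := by gcongr
        _ = levelWeight N J h d := by field_simp
  have hA := levelNorm_pos N
  set w := levelNorm N * Real.exp (N * ptilde J h m) * (Real.exp (-(16 * Q)) /
    (2 * Real.exp 1 ^ 2)) / N with hw
  have hw0 : 0 ≤ w := by positivity
  calc Real.exp (-(16 * Q)) / (2 * Real.exp 1 ^ 2) *
        (levelNorm N * Real.exp (N * ptilde J h m) / q) = q * w := by
        rw [hw, ← hqq]
        field_simp
    _ ≤ L * w := by gcongr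
    _ = ∑ d ∈ Finset.Ico n (n + L), w := by simp
    _ ≤ ∑ d ∈ Finset.Ico n (n + L), if ((N - 2 * d : ℕ) : ℝ) / N ∈ S then
          levelWeight N J h d else 0 := by
        refine Finset.sum_le_sum fun d hd => ?_
        rw [if_pos (hlevel d hd).2.1]
        exact (hlevel d hd).2.2
    _ ≤ _ := by
        refine Finset.sum_le_sum_of_subset_of_nonneg (fun d hd => ?_) fun d _ _ => ?_
        · have := (hlevel d hd).1
          rw [Finset.mem_range]
          omega
        · split_ifs
          · exact levelWeight_nonneg N J h d
          · exact le_rfl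

/-- An upper bound for the second moment over a set of densities on which `ptilde` decays
quadratically away from the maximizer `m`. -/
theorem exists_sum_levelWeight_mul_sq_le {J h m : ℝ} (hm0 : 0 < m) (hm1 : m < 1)
    {S : Set ℝ} [DecidablePred (· ∈ S)] {c : ℝ} (hc : 0 < c)
    (hdec : ∀ x ∈ S, x ∈ Set.Icc (0 : ℝ) 1 → ptilde J h x ≤ ptilde J h m - c * (x - m) ^ 2) :
    ∃ C : ℝ, 0 < C ∧ ∀ N : ℕ, 1 ≤ N →
      (∑ d ∈ range (N / 2 + 1), if ((N - 2 * d : ℕ) : ℝ) / N ∈ S then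
          levelWeight N J h d * ((((N - 2 * d : ℕ) : ℝ) - N * m) / √N) ^ 2 else 0) ≤
        C * (levelNorm N * Real.exp (N * ptilde J h m) / √N) := by
  obtain ⟨C₁, hC₁, hpre⟩ := exists_le_sqrt_mul_exp hm0 hm1 (half_pos hc)
  obtain ⟨C₂, hC₂, hgauss⟩ := exists_sum_gaussian_le hc
  refine ⟨C₁ * (4 / c) * C₂, by positivity, fun N hN => ?_⟩
  have hN' : (1 : ℝ) ≤ N := by exact_mod_cast hN
  have hNpos : (0 : ℝ) < N := by linarith
  have hqq : √(N : ℝ) ^ 2 = N := Real.sq_sqrt (by positivity)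
  have hqpos : 0 < √(N : ℝ) := Real.sqrt_pos.mpr hNpos
  set q := √(N : ℝ) with hq
  set a := (N : ℝ) * (1 - m) / 2 with ha
  have ha0 : 0 ≤ a := by
    have : 0 < 1 - m := by linarith
    positivity
  have hA := levelNorm_pos N
  set B := levelNorm N * Real.exp (N * ptilde J h m) with hB
  have hBpos : 0 < B := by positivity
  have hterm : ∀ d ∈ range (N / 2 + 1), (if ((N - 2 * d : ℕ) : ℝ) / N ∈ S then
      levelWeight N J h d * ((((N - 2 * d : ℕ) : ℝ) - N * m) / q) ^ 2 else 0) ≤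
        B * (C₁ / N) * (4 / c) * Real.exp (-(c * ((d : ℝ) - a) ^ 2 / N)) := by
    intro d hd
    have hd2 : 2 * d ≤ N := by
      have := Finset.mem_range.mp hd
      omega
    split_ifs with hxS
    · obtain ⟨k, hk⟩ : ∃ k, k + 2 * d = N := ⟨N - 2 * d, by omega⟩
      have hkN : N - 2 * d = k := by omega
      have hkR : (k : ℝ) + 2 * d = N := by exact_mod_cast hk
      rw [hkN] at hxS ⊢
      have hw := (levelWeight_bounds J h hN hk).1
      have hp := hpre N k d hN hk
      set x := (k : ℝ) / N with hx
      have hkx : (k : ℝ) = N * x := by rw [hx]; field_simp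
      set t := N * (x - m) ^ 2 with ht
      have ht0 : 0 ≤ t := by positivity
      have htk : (((k : ℝ) - N * m) / q) ^ 2 = t := by
        rw [div_pow, hqq, hkx, ht]
        field_simp
      have htd : ((d : ℝ) - a) ^ 2 / N = t / 4 := by
        have hda : (d : ℝ) - a = -(N * (x - m)) / 2 := by
          rw [ha]
          linarith
        rw [hda, ht]
        field_simp
        ring
      have hxI : x ∈ Set.Icc (0 : ℝ) 1 := by
        refine ⟨by positivity, ?_⟩
        rw [hx, div_le_one hNpos]
        linarith [(Nat.cast_nonneg d : (0 : ℝ) ≤ d)]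
      have hrate := (rateFun_le_ptilde J h hxI).trans (hdec x hxS hxI)
      have hexp : Real.exp (N * rateFun J h x) ≤
          Real.exp (N * ptilde J h m) * Real.exp (-(c * t)) := by
        rw [← Real.exp_add]
        apply Real.exp_le_exp.mpr
        have h1 := mul_le_mul_of_nonneg_left hrate hNpos.le
        rw [ht]
        linarith
      have hroot : 1 / (√((k : ℝ) + 1) * √((d : ℝ) + 1)) ≤ C₁ / N * Real.exp (c / 2 * t) := by
        rw [div_le_iff₀ (by positivity), div_mul_eq_mul_div, div_mul_eq_mul_div, le_div_iff₀ hNpos]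
        linarith
      have hmerge : Real.exp (c / 2 * t) * Real.exp (-(c * t)) = Real.exp (-(c / 2 * t)) := by
        rw [← Real.exp_add]
        ring_nf
      have hlw : levelWeight N J h d ≤ B * (C₁ / N) * Real.exp (-(c / 2 * t)) :=
        calc levelWeight N J h d
            ≤ levelNorm N * Real.exp (N * rateFun J h x) *
              (1 / (√((k : ℝ) + 1) * √((d : ℝ) + 1))) := by
              rw [mul_one_div]
              exact hw
          _ ≤ levelNorm N * (Real.exp (N * ptilde J h m) * Real.exp (-(c * t))) *
              (C₁ / N * Real.exp (c / 2 * t)) := by gcongr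
          _ = B * (C₁ / N) * (Real.exp (c / 2 * t) * Real.exp (-(c * t))) := by
              rw [hB]
              ring
          _ = _ := by rw [hmerge]
      rw [htk]
      calc levelWeight N J h d * t ≤ B * (C₁ / N) * Real.exp (-(c / 2 * t)) * t := by gcongr
        _ = B * (C₁ / N) * (t * Real.exp (-(c / 2 * t))) := by ring
        _ ≤ B * (C₁ / N) * (2 / (c / 2) * Real.exp (-(c / 2 / 2 * t))) :=
            mul_le_mul_of_nonneg_left (mul_exp_neg_le (half_pos hc) t) (by positivity)
        _ = B * (C₁ / N) * (4 / c) * Real.exp (-(c * ((d : ℝ) - a) ^ 2 / N)) := by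
            rw [mul_div_assoc c, htd]
            have e1 : (2 : ℝ) / (c / 2) = 4 / c := by field_simp; norm_num
            have e2 : c / 2 / 2 * t = c * (t / 4) := by ring
            rw [e1, e2]
            ring
    · positivity
  calc _ ≤ ∑ d ∈ range (N / 2 + 1),
        B * (C₁ / N) * (4 / c) * Real.exp (-(c * ((d : ℝ) - a) ^ 2 / N)) :=
        Finset.sum_le_sum hterm
    _ ≤ B * (C₁ / N) * (4 / c) * (C₂ * q) := by
        rw [← Finset.mul_sum]
        exact mul_le_mul_of_nonneg_left (hgauss N hN _ a ha0) (by positivity)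
    _ = C₁ * (4 / c) * C₂ * (B / q) := by
        rw [← hqq]
        field_simp

theorem exists_EL_sq_le {J h m : ℝ} (hJ : 0 ≤ J) (hfix : m = gFun (tauFun J h m))
    {S : Set ℝ} {δ : ℝ} (hδ : 0 < δ) (hS : ∀ x, |x - m| < δ → x ∈ S) {c : ℝ} (hc : 0 < c)
    (hdec : ∀ x ∈ S, x ∈ Set.Icc (0 : ℝ) 1 → ptilde J h x ≤ ptilde J h m - c * (x - m) ^ 2) :
    ∃ K : ℝ, ∀ N : ℕ, 1 ≤ N →
      EL N J h (fun σ => mConf σ ∈ S) (fun σ => (((Msum σ : ℝ) - N * m) / √N) ^ 2) ≤ K := by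
  classical
  have hm0 : 0 < m := hfix ▸ gFun_pos _
  have hm1 : m < 1 := hfix ▸ gFun_lt_one _
  obtain ⟨c', hc', N₀, hden⟩ := exists_le_sum_levelWeight hJ hfix hδ hS
  obtain ⟨C, hC, hnum⟩ := exists_sum_levelWeight_mul_sq_le hm0 hm1 hc hdec
  set e : ℕ → ℝ := fun N =>
    EL N J h (fun σ => mConf σ ∈ S) (fun σ => (((Msum σ : ℝ) - N * m) / √N) ^ 2) with he
  refine ⟨C / c' + ∑ N ∈ range N₀, |e N|, fun N hN => ?_⟩
  rcases lt_or_ge N N₀ with hlt | hge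
  · have h1 : |e N| ≤ ∑ N ∈ range N₀, |e N| :=
      Finset.single_le_sum (f := fun N => |e N|) (fun _ _ => abs_nonneg _)
        (Finset.mem_range.mpr hlt)
    have h2 : 0 < C / c' := by positivity
    exact (le_abs_self (e N)).trans (by linarith)
  · have h0 : 0 ≤ ∑ N ∈ range N₀, |e N| := Finset.sum_nonneg fun _ _ => abs_nonneg _
    refine le_trans ?_ (le_add_of_nonneg_right h0)
    have hNpos : (0 : ℝ) < N := by exact_mod_cast hN
    have hA := levelNorm_pos N
    have hBpos : 0 < levelNorm N * Real.exp (N * ptilde J h m) / √N := by positivity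
    have hd := hden N hN hge
    rw [EL_eq_levelWeight]
    rw [div_le_iff₀ (lt_of_lt_of_le (by positivity) hd)]
    refine (hnum N hN).trans ?_
    calc C * (levelNorm N * Real.exp (N * ptilde J h m) / √N)
        = C / c' * (c' * (levelNorm N * Real.exp (N * ptilde J h m) / √N)) := by field_simp
      _ ≤ _ := by gcongr

/-- Quadratic decay of `ptilde` at a maximizer on a subinterval containing no other one. -/
theorem exists_ptilde_decay {J h m : ℝ} (hfix : m = gFun (tauFun J h m))
    (hmax : ∀ x ∈ Set.Icc (0 : ℝ) 1, ptilde J h x ≤ ptilde J h m)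
    (hc : iteratedDeriv 2 (ptilde J h) m < 0) {a b : ℝ}
    (hlt : ∀ x ∈ Set.Icc a b, x ≠ m → ptilde J h x < ptilde J h m) :
    ∃ c : ℝ, 0 < c ∧ ∀ x ∈ Set.Icc a b, ptilde J h x ≤ ptilde J h m - c * (x - m) ^ 2 := by
  have hm0 : 0 < m := hfix ▸ gFun_pos _
  have hm1 : m < 1 := hfix ▸ gFun_lt_one _
  refine exists_quadratic_decay (contDiff_ptilde J h) ?_ hc hlt
  filter_upwards [Icc_mem_nhds hm0 hm1] with x hx using hmax x hx

/-- Uniform conditional second-moment bound along the critical line: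
if `𝑝̃` has exactly two maximizers `m₁ < m₂` (fixed points with `𝑝̃'' < 0`),
`ξ ∈ (m₁, m₂)`, and `ℙ(S_ℓ) → p_ℓ > 0`, then `E_ℓ[W_ℓ²] ≤ K` for all `N ≥ 1`, where
`W_ℓ = (M - N m_ℓ)/√N`. -/
theorem stmt19 (J h : ℝ) (hJ : 0 ≤ J) (m1 m2 : ℝ)
    (hm1 : m1 ∈ Set.Icc (0:ℝ) 1) (hm2 : m2 ∈ Set.Icc (0:ℝ) 1) (h12 : m1 < m2)
    (hmax1 : ∀ m ∈ Set.Icc (0:ℝ) 1, ptilde J h m ≤ ptilde J h m1)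
    (heq : ptilde J h m2 = ptilde J h m1)
    (honly : ∀ m ∈ Set.Icc (0:ℝ) 1,
      (∀ m' ∈ Set.Icc (0:ℝ) 1, ptilde J h m' ≤ ptilde J h m) → m = m1 ∨ m = m2)
    (hfix1 : m1 = gFun (tauFun J h m1)) (hfix2 : m2 = gFun (tauFun J h m2))
    (hc1 : iteratedDeriv 2 (ptilde J h) m1 < 0)
    (hc2 : iteratedDeriv 2 (ptilde J h) m2 < 0)
    (ξ : ℝ) (hξ : ξ ∈ Set.Ioo m1 m2)
    (p1 p2 : ℝ) (hp1 : 0 < p1) (hp2 : 0 < p2)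
    (hconv1 : Filter.Tendsto (fun N : ℕ => probConf N J h (fun σ => mConf σ < ξ))
      Filter.atTop (nhds p1))
    (hconv2 : Filter.Tendsto (fun N : ℕ => probConf N J h (fun σ => ξ < mConf σ))
      Filter.atTop (nhds p2)) :
    (∃ K : ℝ, ∀ N : ℕ, 1 ≤ N →
      EL N J h (fun σ => mConf σ < ξ)
          (fun σ => (((Msum σ : ℝ) - N * m1) / Real.sqrt N)^2) ≤ K) ∧
    (∃ K : ℝ, ∀ N : ℕ, 1 ≤ N →
      EL N J h (fun σ => ξ < mConf σ)
          (fun σ => (((Msum σ : ℝ) - N * m2) / Real.sqrt N)^2) ≤ K) := by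
  have hmax2 : ∀ m ∈ Set.Icc (0:ℝ) 1, ptilde J h m ≤ ptilde J h m2 := by
    rw [heq]
    exact hmax1
  have hstrict : ∀ x ∈ Set.Icc (0:ℝ) 1, x ≠ m1 → x ≠ m2 → ptilde J h x < ptilde J h m1 := by
    intro x hx hx1 hx2
    refine lt_of_le_of_ne (hmax1 x hx) fun hxe => ?_
    rcases honly x hx (hxe ▸ hmax1) with h | h
    exacts [hx1 h, hx2 h]
  constructor
  · obtain ⟨c, hc, hdec⟩ := exists_ptilde_decay (a := 0) (b := ξ) hfix1 hmax1 hc1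
      fun x hx hne => hstrict x ⟨hx.1, by linarith [hx.2, hξ.2, hm2.2]⟩ hne
        (by linarith [hx.2, hξ.2] : x < m2).ne
    exact exists_EL_sq_le (S := Set.Iio ξ) hJ hfix1 (sub_pos.mpr hξ.1)
      (fun x hx => by have := (abs_lt.mp hx).2; exact Set.mem_Iio.mpr (by linarith)) hc
      fun x hxS hx => hdec x ⟨hx.1, le_of_lt hxS⟩
  · obtain ⟨c, hc, hdec⟩ := exists_ptilde_decay (a := ξ) (b := 1) hfix2 hmax2 hc2
      fun x hx hne => heq ▸ hstrict x ⟨by linarith [hx.1, hξ.1, hm1.1], hx.2⟩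
        (by linarith [hx.1, hξ.1] : m1 < x).ne' hne
    exact exists_EL_sq_le (S := Set.Ioi ξ) hJ hfix2 (sub_pos.mpr hξ.2)
      (fun x hx => by have := (abs_lt.mp hx).1; exact Set.mem_Ioi.mpr (by linarith)) hc
      fun x hxS hx => hdec x ⟨le_of_lt hxS, hx.2⟩
end
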